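/- arXiv:1707.05206 — 7 statements merged into one kernel-verified Lean document; each statement's English description precedes it below -/
import Mathlib

section
/- For every real α with |α| < 1, ∫_0^∞ ₕe(-α x) e^{-x} dx = 1 + ∑_{s=1}^∞ (-1)^s α^s h_s, where both the integral and the series on the right-hand side converge. -/
open Real MeasureTheory

/-- The `n`-th harmonic number `h_n = ∑_{r=1}^n 1/r`. -/
noncomputable def harm (n : ℕ) : ℝ := ∑ r ∈ Finset.range n, 1 / (r + 1 : ℝ)

/-- The harmonic based exponential function `ₕe(x) = 1 + ∑_{n=1}^∞ h_n x^n / n!`. -/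
noncomputable def he (x : ℝ) : ℝ :=
  1 + ∑' n : ℕ, harm (n + 1) * x ^ (n + 1) / (Nat.factorial (n + 1) : ℝ)

/-!
Up to the constant `1`, the function `x ↦ ₕe (r * x)` is the Borel transform of the sequence
`n ↦ h_n r ^ n`. Since `∫₀^∞ (x ^ n / n!) e⁻ˣ dx = 1`, Laplace-integrating a Borel transform gives
back the sum of the original series as soon as the latter converges absolutely. For `|r| < 1`
this holds because `h_n ≤ n`.
-/

section TermwiseIntegration

variable {X E ι : Type*} [MeasurableSpace X] {μ : Measure X} [NormedAddCommGroup E]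
  [CompleteSpace E] [Countable ι]

theorem integrable_tsum_of_summable_integral_norm {F : ι → X → E}
    (hF : ∀ i, Integrable (F i) μ) (hsum : Summable fun i => ∫ x, ‖F i x‖ ∂μ) :
    Integrable (fun x => ∑' i, F i x) μ := by
  have hL1 : ∑' i, ‖(hF i).toL1 (F i)‖ₑ ≠ ⊤ := by
    simpa only [tsum_enorm_ne_top_iff_summable_norm, L1.norm_of_fun_eq_integral_norm] using hsum
  have hcoe : ∀ᵐ x ∂μ, ∀ i, (hF i).toL1 (F i) x = F i x :=
    ae_all_iff.2 fun i => (hF i).coeFn_toL1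
  refine (L1.integrable_coeFn (∑' i, (hF i).toL1 (F i))).congr ?_
  filter_upwards [Lp.coeFn_tsum hL1, hcoe] with x htsum hx
  simp only [htsum, hx]

end TermwiseIntegration

theorem integrableOn_exp_neg_mul_pow_div_factorial (n : ℕ) :
    IntegrableOn (fun x : ℝ => Real.exp (-x) * (x ^ n / n.factorial)) (Set.Ioi 0) := by
  have hGamma := Real.GammaIntegral_convergent (s := n + 1) (by positivity)
  simp only [add_sub_cancel_right, Real.rpow_natCast] at hGamma
  simpa only [IntegrableOn, mul_div_assoc] using hGamma.div_const (n.factorial : ℝ)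

theorem integral_exp_neg_mul_pow_div_factorial (n : ℕ) :
    ∫ x in Set.Ioi (0 : ℝ), Real.exp (-x) * (x ^ n / n.factorial) = 1 := by
  have hGamma := Real.Gamma_eq_integral (s := n + 1) (by positivity)
  simp only [add_sub_cancel_right, Real.rpow_natCast, Real.Gamma_nat_eq_factorial] at hGamma
  simp only [← mul_div_assoc]
  rw [integral_div, ← hGamma, div_self (by positivity)]

section BorelLaplace

variable {E : Type*} [NormedAddCommGroup E] [NormedSpace ℝ E]

/-- The Borel transform of a sequence `a`, that is its exponential generating function
`x ↦ ∑ n, (x ^ n / n!) • a n`, whose Laplace integral recovers `∑ n, a n`. As a `tsum`, it is `0`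
wherever the series diverges. -/
noncomputable def borelTransform (a : ℕ → E) (x : ℝ) : E :=
  ∑' n : ℕ, (x ^ n / n.factorial) • a n

theorem exp_neg_smul_borelTransform (a : ℕ → E) (x : ℝ) :
    Real.exp (-x) • borelTransform a x =
      ∑' n : ℕ, (Real.exp (-x) * (x ^ n / n.factorial)) • a n := by
  simp only [borelTransform, ← tsum_const_smul'', smul_smul]

theorem integral_norm_exp_neg_mul_pow_div_factorial_smul (n : ℕ) (v : E) :
    ∫ x in Set.Ioi (0 : ℝ), ‖(Real.exp (-x) * (x ^ n / n.factorial)) • v‖ = ‖v‖ := by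
  have hnorm : ∀ x ∈ Set.Ioi (0 : ℝ), ‖(Real.exp (-x) * (x ^ n / n.factorial)) • v‖ =
      Real.exp (-x) * (x ^ n / n.factorial) * ‖v‖ := fun x hx => by
    have hx₀ : 0 < x := hx
    rw [norm_smul, Real.norm_of_nonneg (by positivity)]
  rw [setIntegral_congr_fun measurableSet_Ioi hnorm, integral_mul_const,
    integral_exp_neg_mul_pow_div_factorial, one_mul]

variable [CompleteSpace E] {a : ℕ → E}

theorem integrableOn_exp_neg_smul_borelTransform (ha : Summable fun n => ‖a n‖) :
    IntegrableOn (fun x => Real.exp (-x) • borelTransform a x) (Set.Ioi 0) := by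
  simp only [exp_neg_smul_borelTransform]
  refine integrable_tsum_of_summable_integral_norm
    (fun n => (integrableOn_exp_neg_mul_pow_div_factorial n).smul_const (a n)) ?_
  simpa only [integral_norm_exp_neg_mul_pow_div_factorial_smul] using ha

theorem integral_exp_neg_smul_borelTransform (ha : Summable fun n => ‖a n‖) :
    ∫ x in Set.Ioi (0 : ℝ), Real.exp (-x) • borelTransform a x = ∑' n, a n := by
  simp only [exp_neg_smul_borelTransform]
  rw [← integral_tsum_of_summable_integral_norm
    (fun n => (integrableOn_exp_neg_mul_pow_div_factorial n).smul_const (a n))]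
  · simp only [integral_smul_const, integral_exp_neg_mul_pow_div_factorial, one_smul]
  · simpa only [integral_norm_exp_neg_mul_pow_div_factorial_smul] using ha

end BorelLaplace

theorem harm_zero : harm 0 = 0 :=
  Finset.sum_range_zero _

theorem harm_nonneg (n : ℕ) : 0 ≤ harm n :=
  Finset.sum_nonneg fun _ _ => by positivity

theorem harm_le_natCast (n : ℕ) : harm n ≤ n := by
  have hterm (k : ℕ) : 1 / (k + 1 : ℝ) ≤ 1 :=
    div_le_one_of_le₀ (le_add_of_nonneg_left k.cast_nonneg) (by positivity)
  simpa only [harm, Finset.card_range, nsmul_one] using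
    Finset.sum_le_card_nsmul (Finset.range n) _ 1 fun k _ => hterm k

theorem summable_norm_harm_mul_pow {r : ℝ} (hr : |r| < 1) :
    Summable fun n : ℕ => ‖harm n * r ^ n‖ := by
  refine (summable_norm_pow_mul_geometric_of_norm_lt_one (r := r) 1 hr).of_nonneg_of_le
    (fun n => norm_nonneg _) fun n => ?_
  simp only [pow_one, norm_mul, Real.norm_of_nonneg (harm_nonneg n), Real.norm_natCast]
  gcongr
  exact harm_le_natCast n

theorem tsum_harm_succ_mul (c : ℕ → ℝ) :
    ∑' n : ℕ, harm (n + 1) * c (n + 1) = ∑' n : ℕ, harm n * c n := by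
  have hsupp : Function.support (fun n => harm n * c n) ⊆ Set.range Nat.succ := by
    rintro (_ | n) hn
    · exact absurd (by simp only [harm_zero, zero_mul]) hn
    · exact ⟨n, rfl⟩
  exact Nat.succ_injective.tsum_eq hsupp

theorem he_mul_eq_one_add_borelTransform (r x : ℝ) :
    he (r * x) = 1 + borelTransform (fun n => harm n * r ^ n) x := by
  calc he (r * x)
      = 1 + ∑' n : ℕ, harm (n + 1) * ((r * x) ^ (n + 1) / (n + 1).factorial) := by
        simp only [he, mul_div_assoc]
    _ = 1 + ∑' n : ℕ, harm n * ((r * x) ^ n / n.factorial) := by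
        rw [tsum_harm_succ_mul fun n => (r * x) ^ n / n.factorial]
    _ = 1 + borelTransform (fun n => harm n * r ^ n) x := by
        simp only [borelTransform, smul_eq_mul, mul_pow]
        congr! 3 with n
        ring

/-- For `|α| < 1`, `∫_0^∞ ₕe(-αx) e^{-x} dx = 1 + ∑_{s=1}^∞ (-1)^s α^s h_s`,
with both the integral and the series converging. -/
theorem he_integral_geometric (α : ℝ) (hα : |α| < 1) :
    IntegrableOn (fun x : ℝ => he (-α * x) * Real.exp (-x)) (Set.Ioi 0) ∧
    Summable (fun s : ℕ => (-1 : ℝ) ^ (s + 1) * α ^ (s + 1) * harm (s + 1)) ∧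
    (∫ x in Set.Ioi (0:ℝ), he (-α * x) * Real.exp (-x)) =
      1 + ∑' s : ℕ, (-1 : ℝ) ^ (s + 1) * α ^ (s + 1) * harm (s + 1) := by
  have hcoeff : Summable fun n : ℕ => ‖harm n * (-α) ^ n‖ :=
    summable_norm_harm_mul_pow (by rwa [abs_neg])
  have hterm (n : ℕ) : (-1 : ℝ) ^ n * α ^ n * harm n = harm n * (-α) ^ n := by
    rw [← mul_pow, neg_one_mul, mul_comm]
  have hsplit (x : ℝ) : he (-α * x) * Real.exp (-x) =
      Real.exp (-x) + Real.exp (-x) • borelTransform (fun n => harm n * (-α) ^ n) x := by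
    rw [he_mul_eq_one_add_borelTransform, smul_eq_mul]
    ring
  have hexp : IntegrableOn (fun x : ℝ => Real.exp (-x)) (Set.Ioi 0) := integrableOn_exp_neg_Ioi 0
  have hborel := integrableOn_exp_neg_smul_borelTransform hcoeff
  simp only [hsplit, hterm]
  refine ⟨hexp.add hborel, (summable_nat_add_iff 1).2 hcoeff.of_norm, ?_⟩
  rw [integral_add hexp hborel, integral_exp_neg_Ioi_zero,
    integral_exp_neg_smul_borelTransform hcoeff, tsum_harm_succ_mul]
end

section
/- For every real α, ∫_{-∞}^{∞} ₍√h₎e(α x) e^{-x²} dx = √π · ₕe(α²/4), i.e. ∫_{-∞}^{∞} (1 + ∑_{n=1}^∞ h_{n/2} (α x)^n / n!) e^{-x²} dx = √π (1 + ∑_{n=1}^∞ h_n (α²/4)^n / n!). -/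
open Real MeasureTheory

/-- The fractional harmonic number `h_ν = ∫_0^1 (1 - t^ν)/(1 - t) dt` for real `ν`. -/
noncomputable def harmF (ν : ℝ) : ℝ := ∫ t in (0:ℝ)..1, (1 - t ^ ν) / (1 - t)

/-- The square-root analogue `₍√h₎e(x) = 1 + ∑_{n=1}^∞ h_{n/2} x^n / n!`. -/
noncomputable def sqhe (x : ℝ) : ℝ :=
  1 + ∑' n : ℕ, harmF ((n + 1 : ℝ) / 2) * x ^ (n + 1) / (Nat.factorial (n + 1) : ℝ)

/-!
Expand `₍√h₎e(αx)` in powers of `x` and integrate term by term against `e^{-x²}`. The odd powers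
vanish by symmetry, while `∫ x^{2m} e^{-x²} dx = √π (2m)! / (4^m m!)` replaces the `(2m)!` in the
denominator of the series by `4^m m!`; and the coefficient `h_{2m/2}` is the harmonic number `h_m`.
Dominated convergence applies because `h_{n/2}` grows at most exponentially in `n`: then the
absolute series is bounded by `exp (c |x|)`, which is integrable against the Gaussian.
-/

section HarmonicNumbers

lemma harmF_natCast (n : ℕ) : harmF n = harm n :=
  calc harmF n = ∫ t in (0:ℝ)..1, ∑ i ∈ Finset.range n, t ^ i := by
        refine intervalIntegral.integral_congr_ae ?_
        filter_upwards [volume.ae_ne 1] with t ht _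
        rw [rpow_natCast, geom_sum_eq ht, ← neg_div_neg_eq, neg_sub, neg_sub]
    _ = ∑ i ∈ Finset.range n, ∫ t in (0:ℝ)..1, t ^ i :=
        intervalIntegral.integral_finsetSum fun i _ ↦ (continuous_pow i).intervalIntegrable _ _
    _ = harm n := by simp [harm, integral_pow]

lemma one_sub_rpow_le {t ν : ℝ} (ht₀ : 0 ≤ t) (ht₁ : t ≤ 1) (hν : 0 ≤ ν) :
    1 - t ^ ν ≤ (ν + 1) * (1 - t) := by
  have bernoulli : 1 + (ν + 1) * (t - 1) ≤ t ^ (ν + 1) := by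
    simpa using one_add_mul_self_le_rpow_one_add (s := t - 1) (p := ν + 1)
      (by linarith) (by linarith)
  have antitone_exponent : t ^ (ν + 1) ≤ t ^ ν :=
    rpow_le_rpow_of_exponent_ge' ht₀ ht₁ hν (by linarith)
  linarith

lemma abs_harmF_le {ν : ℝ} (hν : 0 ≤ ν) : |harmF ν| ≤ ν + 1 := by
  suffices ∀ᵐ t : ℝ, t ∈ Set.uIoc 0 1 → ‖(1 - t ^ ν) / (1 - t)‖ ≤ ν + 1 by
    simpa [harmF] using intervalIntegral.norm_integral_le_of_norm_le_const_ae this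
  filter_upwards [volume.ae_ne 1] with t ht_ne ht
  obtain ⟨ht₀, ht₁⟩ := Set.uIoc_of_le (zero_le_one' ℝ) ▸ ht
  have hsub : 0 < 1 - t := sub_pos.2 (ht₁.lt_of_ne ht_ne)
  have hnum : 0 ≤ 1 - t ^ ν := sub_nonneg.2 (rpow_le_one ht₀.le ht₁ hν)
  rw [norm_of_nonneg (div_nonneg hnum hsub.le), div_le_iff₀ hsub]
  exact one_sub_rpow_le ht₀.le ht₁ hν

end HarmonicNumbers

section GaussianMoments

lemma integral_eq_zero_of_odd {G E : Type*} [MeasurableSpace G] [AddGroup G] [MeasurableNeg G]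
    [NormedAddCommGroup E] [NormedSpace ℝ E] {μ : Measure G} [μ.IsNegInvariant]
    {f : G → E} (hf : f.Odd) : ∫ x, f x ∂μ = 0 := by
  have h : -∫ x, f x ∂μ = ∫ x, f x ∂μ := by
    rw [← integral_neg, ← integral_neg_eq_self f μ]
    exact integral_congr_ae (.of_forall fun x ↦ (hf x).symm)
  have : IsAddTorsionFree E := .of_isTorsionFree ℝ E
  exact neg_eq_self.1 h

lemma integral_pow_mul_exp_neg_mul_sq_of_odd {n : ℕ} (hn : Odd n) (b : ℝ) :
    ∫ x : ℝ, x ^ n * exp (-b * x ^ 2) = 0 :=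
  integral_eq_zero_of_odd fun x ↦ by rw [hn.neg_pow, neg_sq, neg_mul]

lemma Gamma_natCast_add_half_eq_factorial (m : ℕ) :
    Gamma (m + 1 / 2) = √π * (2 * m).factorial / (4 ^ m * m.factorial) := by
  have duplication := Gamma_mul_Gamma_add_half (m + 1 / 2)
  rw [show (m : ℝ) + 1 / 2 + 1 / 2 = m + 1 by ring, Gamma_nat_eq_factorial,
    show 2 * ((m : ℝ) + 1 / 2) = (2 * m : ℕ) + 1 by push_cast; ring, Gamma_nat_eq_factorial,
    sub_add_cancel_right, rpow_neg zero_le_two, rpow_natCast, pow_mul,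
    show (2 : ℝ) ^ 2 = 4 by norm_num] at duplication
  field_simp at duplication ⊢
  linarith

lemma integral_pow_two_mul_mul_exp_neg_mul_sq {b : ℝ} (hb : 0 < b) (m : ℕ) :
    ∫ x : ℝ, x ^ (2 * m) * exp (-b * x ^ 2)
      = √(π / b) * ((2 * m).factorial / ((4 * b) ^ m * m.factorial)) := by
  calc ∫ x : ℝ, x ^ (2 * m) * exp (-b * x ^ 2)
      = 2 * ∫ x in Set.Ioi (0 : ℝ), x ^ (2 * m) * exp (-b * x ^ 2) := by
        rw [← integral_comp_abs (f := fun x ↦ x ^ (2 * m) * exp (-b * x ^ 2))]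
        simp only [pow_mul, sq_abs]
    _ = b ^ (-((m : ℝ) + 1 / 2)) * Gamma (m + 1 / 2) := by
        have h := integral_rpow_mul_exp_neg_mul_rpow (p := 2) (q := (2 * m : ℕ)) two_pos
          (by linarith [(2 * m).cast_nonneg (α := ℝ)]) hb
        simp only [rpow_natCast, rpow_two] at h
        rw [h, neg_div, show (((2 * m : ℕ) : ℝ) + 1) / 2 = m + 1 / 2 by push_cast; ring]
        ring
    _ = √(π / b) * ((2 * m).factorial / ((4 * b) ^ m * m.factorial)) := by
        rw [Gamma_natCast_add_half_eq_factorial, rpow_neg hb.le, rpow_add hb, rpow_natCast,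
          ← sqrt_eq_rpow, sqrt_div pi_pos.le, mul_pow]
        field_simp

lemma integrable_exp_mul_abs_mul_exp_neg_mul_sq {b : ℝ} (hb : 0 < b) (c : ℝ) :
    Integrable fun x : ℝ ↦ exp (c * |x|) * exp (-b * x ^ 2) := by
  refine ((integrable_exp_neg_mul_sq (half_pos hb)).const_mul (exp (c ^ 2 / (2 * b)))).mono'
    (by fun_prop) (.of_forall fun x ↦ ?_)
  have amgm : c * |x| ≤ c ^ 2 / (2 * b) + b / 2 * x ^ 2 := by
    have square : c ^ 2 / (2 * b) + b / 2 * x ^ 2 - c * |x| = (c - b * |x|) ^ 2 / (2 * b) := by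
      rw [← sq_abs x]
      field_simp
      ring
    linarith [show 0 ≤ (c - b * |x|) ^ 2 / (2 * b) by positivity]
  rw [norm_of_nonneg (by positivity), ← exp_add, ← exp_add]
  exact exp_le_exp.2 (by linarith)

end GaussianMoments

section ExpGenFun

/-- The exponential generating function `∑ a_n x^n / n!` of a real sequence `a`. As a `tsum` it is
meaningful only where the series converges, which is everywhere if `a` grows at most
exponentially. -/
noncomputable def expGenFun (a : ℕ → ℝ) (x : ℝ) : ℝ := ∑' n, a n * x ^ n / n.factorial

variable {a : ℕ → ℝ} {C r : ℝ}

lemma abs_expGenFun_term_le (ha : ∀ n, |a n| ≤ C * r ^ n) (x : ℝ) (n : ℕ) :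
    |a n * x ^ n / n.factorial| ≤ C * ((r * |x|) ^ n / n.factorial) := by
  rw [abs_div, abs_mul, abs_pow, Nat.abs_cast, mul_pow, ← mul_div_assoc, ← mul_assoc]
  gcongr
  exact ha n

lemma hasSum_pow_div_factorial (x : ℝ) : HasSum (fun n : ℕ ↦ x ^ n / n.factorial) (exp x) :=
  exp_eq_exp_ℝ ▸ NormedSpace.expSeries_div_hasSum_exp x

lemma summable_expGenFun_term (ha : ∀ n, |a n| ≤ C * r ^ n) (x : ℝ) :
    Summable fun n ↦ a n * x ^ n / n.factorial :=
  .of_norm_bounded ((hasSum_pow_div_factorial (r * |x|)).mul_left C).summable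
    (abs_expGenFun_term_le ha x)

lemma expGenFun_eq_zero_add (ha : ∀ n, |a n| ≤ C * r ^ n) (x : ℝ) :
    expGenFun a x = a 0 + ∑' n, a (n + 1) * x ^ (n + 1) / (n + 1).factorial := by
  simpa [expGenFun] using (summable_expGenFun_term ha x).tsum_eq_zero_add

lemma hasSum_integral_expGenFun_mul_gaussian (ha : ∀ n, |a n| ≤ C * r ^ n) {b : ℝ} (hb : 0 < b)
    (c : ℝ) :
    HasSum (fun n ↦ a n * c ^ n / n.factorial * ∫ x : ℝ, x ^ n * exp (-b * x ^ 2))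
      (∫ x : ℝ, expGenFun a (c * x) * exp (-b * x ^ 2)) := by
  have dominating_hasSum (x : ℝ) :
      HasSum (fun n : ℕ ↦ C * ((r * |c * x|) ^ n / n.factorial) * exp (-b * x ^ 2))
        (C * exp (r * |c * x|) * exp (-b * x ^ 2)) :=
    ((hasSum_pow_div_factorial _).mul_left C).mul_right _
  have dominating_integrable :
      Integrable fun x : ℝ ↦ C * exp (r * |c * x|) * exp (-b * x ^ 2) := by
    simpa only [abs_mul, mul_assoc] using
      (integrable_exp_mul_abs_mul_exp_neg_mul_sq hb (r * |c|)).const_mul C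
  have termwise := hasSum_integral_of_dominated_convergence (μ := volume)
    (F := fun n x ↦ a n * (c * x) ^ n / n.factorial * exp (-b * x ^ 2))
    (fun n x ↦ C * ((r * |c * x|) ^ n / n.factorial) * exp (-b * x ^ 2))
    (fun n ↦ by fun_prop)
    (fun n ↦ .of_forall fun x ↦ by
      rw [norm_mul, norm_of_nonneg (exp_pos _).le]
      gcongr
      exact abs_expGenFun_term_le ha (c * x) n)
    (.of_forall fun x ↦ (dominating_hasSum x).summable)
    (by simpa only [(dominating_hasSum _).tsum_eq] using dominating_integrable)
    (.of_forall fun x ↦ (summable_expGenFun_term ha (c * x)).hasSum.mul_right _)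
  refine termwise.congr_fun fun n ↦ ?_
  rw [← integral_const_mul]
  congr with x
  ring

theorem integral_expGenFun_mul_gaussian (ha : ∀ n, |a n| ≤ C * r ^ n) {b : ℝ} (hb : 0 < b)
    (c : ℝ) :
    ∫ x : ℝ, expGenFun a (c * x) * exp (-b * x ^ 2)
      = √(π / b) * expGenFun (fun m ↦ a (2 * m)) (c ^ 2 / (4 * b)) := by
  have odd_terms_vanish : ∀ n ∉ Set.range (2 * · : ℕ → ℕ),
      a n * c ^ n / n.factorial * ∫ x : ℝ, x ^ n * exp (-b * x ^ 2) = 0 := fun n hn ↦ by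
    have hodd : Odd n := by
      simpa [Set.mem_range, eq_comm, ← even_iff_exists_two_mul] using hn
    rw [integral_pow_mul_exp_neg_mul_sq_of_odd hodd, mul_zero]
  have even_terms := ((mul_right_injective₀ (two_ne_zero' ℕ)).hasSum_iff odd_terms_vanish).2
    (hasSum_integral_expGenFun_mul_gaussian ha hb c)
  rw [← even_terms.tsum_eq, expGenFun, ← tsum_mul_left]
  refine tsum_congr fun m ↦ ?_
  simp only [Function.comp_apply]
  rw [integral_pow_two_mul_mul_exp_neg_mul_sq hb, div_pow, ← pow_mul]
  field_simp

end ExpGenFun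

section SquareRootHarmonicExponential

/-- The coefficients of `₍√h₎e` as an exponential generating function: `h_{n/2}`, except that the
constant term is `1` although `h_0 = 0`. -/
noncomputable def sqheCoeff : ℕ → ℝ
  | 0 => 1
  | n + 1 => harmF ((n + 1 : ℝ) / 2)

lemma abs_sqheCoeff_le (n : ℕ) : |sqheCoeff n| ≤ 2 ^ n := by
  cases n with
  | zero => simp [sqheCoeff]
  | succ k =>
    have hpow : ((k + 1 : ℕ) : ℝ) + 1 ≤ 2 ^ (k + 1) := by
      exact_mod_cast (k + 1).lt_two_pow_self
    push_cast at hpow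
    calc |sqheCoeff (k + 1)| ≤ (k + 1 : ℝ) / 2 + 1 := abs_harmF_le (by positivity)
      _ ≤ 2 ^ (k + 1) := by linarith [k.cast_nonneg (α := ℝ)]

lemma sqheCoeff_two_mul_succ (m : ℕ) : sqheCoeff (2 * (m + 1)) = harm (m + 1) := by
  rw [← harmF_natCast, Nat.mul_succ, sqheCoeff]
  congr 1
  push_cast
  ring

lemma sqhe_eq_expGenFun (x : ℝ) : sqhe x = expGenFun sqheCoeff x :=
  (expGenFun_eq_zero_add (C := 1) (r := 2) (by simpa using abs_sqheCoeff_le) x).symm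

lemma he_eq_expGenFun (x : ℝ) : he x = expGenFun (fun m ↦ sqheCoeff (2 * m)) x := by
  have growth (m : ℕ) : |sqheCoeff (2 * m)| ≤ 1 * (2 ^ 2) ^ m := by
    simpa only [one_mul, pow_mul] using abs_sqheCoeff_le (2 * m)
  rw [expGenFun_eq_zero_add growth]
  simp only [sqheCoeff_two_mul_succ]
  rfl

end SquareRootHarmonicExponential

/-- `∫_{-∞}^{∞} ₍√h₎e(αx) e^{-x²} dx = √π · ₕe(α²/4)`. -/
theorem sqhe_gaussian_integral (α : ℝ) :
    (∫ x : ℝ, sqhe (α * x) * Real.exp (-x ^ 2)) = Real.sqrt π * he (α ^ 2 / 4) := by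
  simp only [sqhe_eq_expGenFun, he_eq_expGenFun]
  simpa using integral_expGenFun_mul_gaussian (C := 1) (r := 2) (by simpa using abs_sqheCoeff_le)
    one_pos α
end

section
/- For every real x > 0, ₍√h₎e(-x) = ∫_0^∞ ₕe(-η x²) g_{1/2}(η) dη, where g_{1/2}(η) = (1/(2√(π η³))) e^{-1/(4η)}. -/
open Real MeasureTheory

/-!
A density `g` on `(0, ∞)` with Laplace transform `s ↦ e^{-s^p}` carries the integral representation
of `ₕe` to that of its index-`p` analogue. Summing the exponential series under the integral sign
gives `1 + ∑ h_{pn} y^n / n! = 1 + ∫_0^1 (e^y - e^{t^p y}) / (1 - t) dt`. Take `p = 1` and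
`y = -ηx`, multiply by `g(η)` and integrate over `η`: Fubini replaces `e^{-xη}` and `e^{-txη}` by
`e^{-x^p}` and `e^{-t^p x^p}`, which is the representation of index `p` at `-x^p`.

For `p = 1/2` the density is Lévy's. Substituting `v = η^{-1/2}` turns its Laplace transform at `s`
into a Gaussian integral in `v - 2√s / v`, and the Cauchy–Schlömilch identity
`∫_0^∞ f(v - c/v) dv = ∫_0^∞ f(v) dv` for even `f` evaluates it.
-/

section CauchySchlomilch

open Set

variable {E : Type*} [NormedAddCommGroup E] [NormedSpace ℝ E] {c : ℝ}

lemma bijOn_sub_div (hc : 0 < c) : BijOn (fun v : ℝ => v - c / v) (Ioi 0) univ := by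
  refine ⟨mapsTo_univ _ _, StrictMonoOn.injOn fun u hu v _ huv => ?_, fun w _ => ?_⟩
  · have : c / v < c / u := div_lt_div_of_pos_left hc hu huv
    linarith
  · have habs : |w| < √(w ^ 2 + 4 * c) := by
      rw [← sqrt_sq_eq_abs]
      exact sqrt_lt_sqrt (sq_nonneg w) (by linarith)
    have hpos : 0 < w + √(w ^ 2 + 4 * c) := by linarith [neg_abs_le w]
    have hsq : √(w ^ 2 + 4 * c) ^ 2 = w ^ 2 + 4 * c := sq_sqrt (by positivity)
    refine ⟨(w + √(w ^ 2 + 4 * c)) / 2, half_pos hpos, ?_⟩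
    dsimp only
    field_simp
    linear_combination hsq

lemma hasDerivAt_sub_div (c : ℝ) {v : ℝ} (hv : v ≠ 0) :
    HasDerivAt (fun v : ℝ => v - c / v) (1 + c / v ^ 2) v := by
  convert! (hasDerivAt_id v).sub ((hasDerivAt_inv hv).const_mul c) using 1
  field_simp
  ring

lemma integrableOn_Ioi_deriv_smul_comp_sub_div {f : ℝ → E} (hf : Integrable f) (hc : 0 < c) :
    IntegrableOn (fun v => (1 + c / v ^ 2) • f (v - c / v)) (Ioi 0) := by
  have h := (integrableOn_image_iff_integrableOn_abs_deriv_smul measurableSet_Ioi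
    (fun v hv => (hasDerivAt_sub_div c (ne_of_gt hv)).hasDerivWithinAt)
    (bijOn_sub_div hc).injOn f).1 hf.integrableOn
  refine h.congr_fun (fun v _ => ?_) measurableSet_Ioi
  dsimp only
  rw [abs_of_pos (by positivity)]

lemma integral_Ioi_deriv_smul_comp_sub_div (f : ℝ → E) (hc : 0 < c) :
    ∫ v in Ioi (0 : ℝ), (1 + c / v ^ 2) • f (v - c / v) = ∫ v, f v := by
  have h := integral_image_eq_integral_abs_deriv_smul measurableSet_Ioi
    (fun v hv => (hasDerivAt_sub_div c (ne_of_gt hv)).hasDerivWithinAt)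
    (bijOn_sub_div hc).injOn f
  rw [(bijOn_sub_div hc).image_eq, setIntegral_univ] at h
  rw [h]
  refine setIntegral_congr_fun measurableSet_Ioi fun v _ => ?_
  rw [abs_of_pos (by positivity)]

lemma integral_Ioi_smul_comp_div (f : ℝ → E) (hc : 0 < c) :
    ∫ v in Ioi (0 : ℝ), (c / v ^ 2) • f (c / v) = ∫ v in Ioi (0 : ℝ), f v := by
  calc ∫ v in Ioi (0 : ℝ), (c / v ^ 2) • f (c / v)
      = ∫ v in Ioi (0 : ℝ), (|-1| * v ^ (-1 - 1 : ℝ)) • c • f (c * v ^ (-1 : ℝ)) := by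
        refine setIntegral_congr_fun measurableSet_Ioi fun v (hv : 0 < v) => ?_
        have : v ^ (-1 - 1 : ℝ) = (v ^ 2)⁻¹ := by
          rw [← rpow_natCast, ← rpow_neg hv.le]; norm_num
        simp only [this, rpow_neg_one, smul_smul, abs_neg, abs_one, one_mul, div_eq_inv_mul,
          mul_comm c v⁻¹]
    _ = c • ∫ v in Ioi (0 : ℝ), f (c * v) := by
        rw [integral_comp_rpow_Ioi (fun v => c • f (c * v)) (by norm_num), integral_smul]
    _ = ∫ v in Ioi (0 : ℝ), f v := by
        rw [integral_comp_mul_left_Ioi' f 0 hc, mul_zero]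

lemma integral_eq_two_smul_integral_Ioi_of_even {f : ℝ → E} (hf : Integrable f)
    (heven : Function.Even f) : ∫ v, f v = (2 : ℝ) • ∫ v in Ioi (0 : ℝ), f v := by
  have hneg := integral_comp_neg_Iic 0 f
  simp only [heven _, neg_zero] at hneg
  rw [← intervalIntegral.integral_Iic_add_Ioi hf.integrableOn hf.integrableOn, hneg, two_smul]

lemma integrableOn_Ioi_comp_sub_div {f : ℝ → E} (hf : Integrable f) (hc : 0 < c) :
    IntegrableOn (fun v => f (v - c / v)) (Ioi 0) := by
  have hmeas : Measurable fun v : ℝ => (1 + c / v ^ 2)⁻¹ := by fun_prop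
  refine IntegrableOn.congr_fun ((integrableOn_Ioi_deriv_smul_comp_sub_div hf hc).bdd_smul 1
    hmeas.aestronglyMeasurable (ae_of_all _ fun v => ?_)) (fun v _ => ?_) measurableSet_Ioi
  · rw [norm_of_nonneg (by positivity)]
    exact inv_le_one_of_one_le₀ (le_add_of_nonneg_right (by positivity))
  · exact inv_smul_smul₀ (by positivity) _

theorem integral_Ioi_comp_sub_div {f : ℝ → E} (hf : Integrable f) (heven : Function.Even f)
    (hc : 0 ≤ c) : ∫ v in Ioi (0 : ℝ), f (v - c / v) = ∫ v in Ioi (0 : ℝ), f v := by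
  rcases hc.eq_or_lt with rfl | hc
  · simp only [zero_div, sub_zero]
  have hint := integrableOn_Ioi_comp_sub_div hf hc
  have hint' : IntegrableOn (fun v => (c / v ^ 2) • f (v - c / v)) (Ioi 0) := by
    refine ((integrableOn_Ioi_deriv_smul_comp_sub_div hf hc).sub hint).congr_fun (fun v _ => ?_)
      measurableSet_Ioi
    simp only [Pi.sub_apply, add_smul, one_smul, add_sub_cancel_left]
  have hreflect : ∫ v in Ioi (0 : ℝ), (c / v ^ 2) • f (v - c / v)
      = ∫ v in Ioi (0 : ℝ), f (v - c / v) := by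
    rw [← integral_Ioi_smul_comp_div (fun v => f (v - c / v)) hc]
    refine setIntegral_congr_fun measurableSet_Ioi fun v _ => ?_
    rw [div_div_cancel₀ hc.ne', ← heven, neg_sub]
  refine smul_right_injective E (two_ne_zero' ℝ) ?_
  calc (2 : ℝ) • ∫ v in Ioi (0 : ℝ), f (v - c / v)
      = ∫ v in Ioi (0 : ℝ), (1 + c / v ^ 2) • f (v - c / v) := by
        simp only [add_smul, one_smul]
        rw [integral_add hint hint', hreflect, two_smul]
    _ = (2 : ℝ) • ∫ v in Ioi (0 : ℝ), f v := by
        rw [integral_Ioi_deriv_smul_comp_sub_div f hc,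
          integral_eq_two_smul_integral_Ioi_of_even hf heven]

end CauchySchlomilch

section FractionalHarmonic

open Set

lemma one_sub_rpow_le_s6 {a t : ℝ} (ha : 0 ≤ a) (ht0 : 0 < t) (ht1 : t ≤ 1) :
    1 - t ^ a ≤ (1 + a) * (1 - t) := by
  have hbernoulli : 1 + (1 + a) * (t - 1) ≤ t ^ (1 + a) := by
    simpa using one_add_mul_self_le_rpow_one_add (by linarith : -1 ≤ t - 1)
      (by linarith : 1 ≤ 1 + a)
  have hmono : t ^ (1 + a) ≤ t ^ a := rpow_le_rpow_of_exponent_ge ht0 ht1 (by linarith)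
  linarith

lemma norm_one_sub_rpow_div_le {a t : ℝ} (ha : 0 ≤ a) (ht0 : 0 < t) (ht1 : t ≤ 1) :
    ‖(1 - t ^ a) / (1 - t)‖ ≤ 1 + a := by
  have hnum : 0 ≤ 1 - t ^ a := sub_nonneg.2 (rpow_le_one ht0.le ht1 ha)
  have hden : 0 ≤ 1 - t := sub_nonneg.2 ht1
  rw [norm_of_nonneg (div_nonneg hnum hden)]
  exact div_le_of_le_mul₀ hden (by positivity) (one_sub_rpow_le_s6 ha ht0 ht1)

lemma harm_eq_harmF (n : ℕ) : harm n = harmF n := by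
  have hgeom : EqOn (fun t : ℝ => (1 - t ^ (n : ℝ)) / (1 - t))
      (fun t => ∑ r ∈ Finset.range n, t ^ r) (uIoo 0 1) := fun t ht => by
    rw [uIoo_of_le zero_le_one] at ht
    dsimp only
    rw [rpow_natCast, div_eq_iff (sub_pos.2 ht.2).ne', geom_sum_mul_neg]
  rw [harm, harmF, intervalIntegral.integral_congr_uIoo hgeom,
    intervalIntegral.integral_finsetSum fun r _ => (continuous_pow r).intervalIntegrable 0 1]
  simp only [integral_pow, one_pow, zero_pow (Nat.succ_ne_zero _), sub_zero]

lemma hasSum_pow_succ_div_factorial_succ (z : ℝ) :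
    HasSum (fun n : ℕ => z ^ (n + 1) / ((n + 1).factorial : ℝ)) (exp z - 1) := by
  have h := NormedSpace.expSeries_div_hasSum_exp z
  rw [← exp_eq_exp_ℝ] at h
  simpa using (hasSum_nat_add_iff' 1).2 h

lemma summable_one_add_mul_mul_pow_div_factorial (p z : ℝ) :
    Summable fun n : ℕ => (1 + p * (n + 1)) * (z ^ (n + 1) / ((n + 1).factorial : ℝ)) := by
  refine ((hasSum_pow_succ_div_factorial_succ z).summable.add
    ((summable_pow_div_factorial z).mul_left (p * z))).congr fun n => ?_
  rw [Nat.factorial_succ]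
  push_cast
  field_simp
  ring

lemma hasSum_one_sub_rpow_div_mul_pow_div_factorial (p y : ℝ) {t : ℝ} (ht : 0 ≤ t) :
    HasSum (fun n : ℕ =>
        (1 - t ^ (p * (n + 1))) / (1 - t) * (y ^ (n + 1) / ((n + 1).factorial : ℝ)))
      ((exp y - exp (t ^ p * y)) / (1 - t)) := by
  have h := ((hasSum_pow_succ_div_factorial_succ y).sub
    (hasSum_pow_succ_div_factorial_succ (t ^ p * y))).div_const (1 - t)
  rw [sub_sub_sub_cancel_right] at h
  refine h.congr_fun fun n => ?_
  have hpow : t ^ (p * (n + 1)) = (t ^ p) ^ (n + 1) := by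
    rw [rpow_mul ht, ← rpow_natCast, Nat.cast_succ]
  rw [hpow, mul_pow]
  ring

/-- The harmonic exponential of index `p`, `1 + ∑_{n=1}^∞ h_{pn} y^n / n!`, the common form of `he`
(`p = 1`) and `sqhe` (`p = 1/2`). -/
noncomputable def harmExp (p y : ℝ) : ℝ :=
  1 + ∑' n : ℕ, harmF (p * (n + 1)) * y ^ (n + 1) / ((n + 1).factorial : ℝ)

lemma he_eq_harmExp_one : he = harmExp 1 := by
  ext y
  simp only [he, harmExp, harm_eq_harmF, Nat.cast_add, Nat.cast_one, one_mul]

lemma sqhe_eq_harmExp_half : sqhe = harmExp (1 / 2) := by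
  ext y
  simp only [sqhe, harmExp, div_eq_inv_mul, mul_one]

theorem harmExp_eq_one_add_integral {p : ℝ} (hp : 0 ≤ p) (y : ℝ) :
    harmExp p y = 1 + ∫ t in (0 : ℝ)..1, (exp y - exp (t ^ p * y)) / (1 - t) := by
  have hbound : ∀ n : ℕ, ∀ t ∈ uIoc (0 : ℝ) 1,
      ‖(1 - t ^ (p * (n + 1))) / (1 - t) * (y ^ (n + 1) / ((n + 1).factorial : ℝ))‖
        ≤ (1 + p * (n + 1)) * (|y| ^ (n + 1) / ((n + 1).factorial : ℝ)) := by
    intro n t ht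
    rw [uIoc_of_le zero_le_one] at ht
    rw [norm_mul, norm_div (y ^ _), norm_pow, norm_natCast, norm_eq_abs y]
    gcongr
    exact norm_one_sub_rpow_div_le (by positivity) ht.1 ht.2
  have hmeas : ∀ n : ℕ, Measurable fun t : ℝ =>
      (1 - t ^ (p * (n + 1))) / (1 - t) * (y ^ (n + 1) / ((n + 1).factorial : ℝ)) :=
    fun n => by fun_prop
  have hsum := intervalIntegral.hasSum_integral_of_dominated_convergence (μ := volume) _
    (fun n => (hmeas n).aestronglyMeasurable) (fun n => ae_of_all _ (hbound n))
    (ae_of_all _ fun _ _ => summable_one_add_mul_mul_pow_div_factorial p |y|)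
    intervalIntegrable_const (ae_of_all _ fun t ht =>
      hasSum_one_sub_rpow_div_mul_pow_div_factorial p y (uIoc_of_le (zero_le_one' ℝ) ▸ ht).1.le)
  rw [harmExp, ← hsum.tsum_eq]
  simp only [intervalIntegral.integral_mul_const, harmF, mul_div_assoc]

end FractionalHarmonic

section Subordination

open Set Function

lemma exp_sub_exp_le_sub {a b : ℝ} (hba : b ≤ a) (ha : a ≤ 0) : exp a - exp b ≤ a - b := by
  have hsub : 1 - exp (b - a) ≤ a - b := by linarith [add_one_le_exp (b - a)]
  calc exp a - exp b = exp a * (1 - exp (b - a)) := by rw [mul_sub, mul_one, ← exp_add]; ring_nf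
    _ ≤ 1 * (a - b) :=
      (mul_le_mul_of_nonneg_left hsub (exp_pos a).le).trans
        (mul_le_mul_of_nonneg_right (exp_le_one_iff.2 ha) (sub_nonneg.2 hba))
    _ = a - b := one_mul _

/-- `g` is the density on `(0, ∞)` of the one-sided `p`-stable law, characterised by its Laplace
transform `s ↦ e^{-s^p}`; the values of `g` outside `(0, ∞)` are irrelevant. -/
structure IsStableDensity (p : ℝ) (g : ℝ → ℝ) : Prop where
  measurable : Measurable g
  nonneg : ∀ η, 0 < η → 0 ≤ g η
  integral_exp_neg_mul : ∀ s, 0 ≤ s → ∫ η in Ioi (0 : ℝ), exp (-(s * η)) * g η = exp (-s ^ p)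

/-- The integrand in `t` of `ₕe(-xη) - 1`, weighted by `g η`; integrating it over `η` instead gives
the integrand of the subordinated harmonic exponential. At `t = 1` it is `0` by convention. -/
noncomputable def subordinationKernel (g : ℝ → ℝ) (x t η : ℝ) : ℝ :=
  (exp (-(x * η)) * g η - exp (-(t * x * η)) * g η) / (1 - t)

lemma he_neg_mul_mul (g : ℝ → ℝ) (x η : ℝ) :
    he (-η * x) * g η = g η + ∫ t in (0 : ℝ)..1, subordinationKernel g x t η := by
  rw [he_eq_harmExp_one, harmExp_eq_one_add_integral zero_le_one, add_mul, one_mul,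
    ← intervalIntegral.integral_mul_const]
  congr 2
  ext t
  rw [subordinationKernel, rpow_one]
  ring_nf

namespace IsStableDensity

variable {p : ℝ} {g : ℝ → ℝ}

lemma integrableOn_exp_neg_mul (hg : IsStableDensity p g) {s : ℝ} (hs : 0 ≤ s) :
    IntegrableOn (fun η => exp (-(s * η)) * g η) (Ioi 0) :=
  .of_integral_ne_zero (hg.integral_exp_neg_mul s hs ▸ (exp_pos _).ne')

lemma integral_one (hg : IsStableDensity p g) (hp : p ≠ 0) : ∫ η in Ioi (0 : ℝ), g η = 1 := by
  simpa [zero_rpow hp] using hg.integral_exp_neg_mul 0 le_rfl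

lemma integrableOn_subordinationKernel (hg : IsStableDensity p g) {x t : ℝ} (hx : 0 ≤ x)
    (ht : 0 ≤ t) : IntegrableOn (subordinationKernel g x t) (Ioi 0) :=
  ((hg.integrableOn_exp_neg_mul hx).sub
    (hg.integrableOn_exp_neg_mul (mul_nonneg ht hx))).div_const _

lemma integral_subordinationKernel (hg : IsStableDensity p g) {x t : ℝ} (hx : 0 ≤ x)
    (ht : 0 ≤ t) : ∫ η in Ioi (0 : ℝ), subordinationKernel g x t η =
      (exp (-x ^ p) - exp (t ^ p * -x ^ p)) / (1 - t) := by
  have htx := mul_nonneg ht hx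
  simp only [subordinationKernel]
  rw [integral_div, integral_sub (hg.integrableOn_exp_neg_mul hx)
    (hg.integrableOn_exp_neg_mul htx), hg.integral_exp_neg_mul x hx,
    hg.integral_exp_neg_mul _ htx, mul_rpow ht hx, mul_neg]

lemma subordinationKernel_nonpos (hg : IsStableDensity p g) {x t η : ℝ} (hx : 0 ≤ x) (ht : t ≤ 1)
    (hη : 0 < η) : subordinationKernel g x t η ≤ 0 := by
  have hle : exp (-(x * η)) ≤ exp (-(t * x * η)) := by
    gcongr
    exact mul_le_of_le_one_left hx ht
  exact div_nonpos_of_nonpos_of_nonneg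
    (sub_nonpos.2 (mul_le_mul_of_nonneg_right hle (hg.nonneg η hη))) (sub_nonneg.2 ht)

lemma integral_norm_subordinationKernel_le (hg : IsStableDensity p g) (hp : 0 ≤ p) {x t : ℝ}
    (hx : 0 ≤ x) (ht0 : 0 < t) (ht1 : t ≤ 1) :
    ∫ η in Ioi (0 : ℝ), ‖subordinationKernel g x t η‖ ≤ (1 + p) * x ^ p := by
  have hxp : 0 ≤ x ^ p := rpow_nonneg hx p
  have htp : 0 ≤ t ^ p := rpow_nonneg ht0.le p
  have htp_le : t ^ p ≤ 1 := rpow_le_one ht0.le ht1 hp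
  calc ∫ η in Ioi (0 : ℝ), ‖subordinationKernel g x t η‖
      = (exp (t ^ p * -x ^ p) - exp (-x ^ p)) / (1 - t) := by
        rw [← neg_sub, neg_div, ← hg.integral_subordinationKernel hx ht0.le, ← integral_neg]
        exact setIntegral_congr_fun measurableSet_Ioi fun η hη =>
          norm_of_nonpos (hg.subordinationKernel_nonpos hx ht1 hη)
    _ ≤ (1 + p) * x ^ p := by
        refine div_le_of_le_mul₀ (sub_nonneg.2 ht1) (by positivity) ?_
        calc exp (t ^ p * -x ^ p) - exp (-x ^ p) ≤ t ^ p * -x ^ p - -x ^ p :=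
              exp_sub_exp_le_sub (by nlinarith) (by nlinarith)
          _ = x ^ p * (1 - t ^ p) := by ring
          _ ≤ x ^ p * ((1 + p) * (1 - t)) := by
              gcongr
              exact one_sub_rpow_le_s6 hp ht0 ht1
          _ = (1 + p) * x ^ p * (1 - t) := by ring

lemma integrable_uncurry_subordinationKernel (hg : IsStableDensity p g) (hp : 0 ≤ p) {x : ℝ}
    (hx : 0 ≤ x) : Integrable (uncurry (subordinationKernel g x))
      ((volume.restrict (uIoc 0 1)).prod (volume.restrict (Ioi 0))) := by
  have hmeas : Measurable (uncurry (subordinationKernel g x)) := by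
    have := hg.measurable
    simp only [subordinationKernel, uncurry_def]
    fun_prop
  rw [integrable_prod_iff hmeas.aestronglyMeasurable, uIoc_of_le zero_le_one]
  refine ⟨?_, .of_bound hmeas.aestronglyMeasurable.norm.integral_prod_right' ((1 + p) * x ^ p) ?_⟩
  · filter_upwards [ae_restrict_mem measurableSet_Ioc] with t ht
    exact hg.integrableOn_subordinationKernel hx ht.1.le
  · filter_upwards [ae_restrict_mem measurableSet_Ioc] with t ht
    rw [norm_of_nonneg (integral_nonneg fun _ => norm_nonneg _)]
    exact hg.integral_norm_subordinationKernel_le hp hx ht.1 ht.2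

theorem integral_he_neg_mul (hg : IsStableDensity p g) (hp : 0 < p) {x : ℝ} (hx : 0 ≤ x) :
    ∫ η in Ioi (0 : ℝ), he (-η * x) * g η = harmExp p (-x ^ p) := by
  have hprod := hg.integrable_uncurry_subordinationKernel hp.le hx
  have hint : IntegrableOn (fun η => ∫ t in (0 : ℝ)..1, subordinationKernel g x t η) (Ioi 0) := by
    simpa only [intervalIntegral.integral_of_le zero_le_one, uIoc_of_le zero_le_one]
      using! hprod.integral_prod_right
  have hone := hg.integral_one hp.ne'
  have hgint : IntegrableOn g (Ioi 0) := .of_integral_ne_zero (hone ▸ one_ne_zero)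
  simp only [he_neg_mul_mul]
  rw [integral_add hgint hint, hone, ← intervalIntegral_integral_swap hprod,
    harmExp_eq_one_add_integral hp.le]
  congr 1
  refine intervalIntegral.integral_congr fun t ht => ?_
  rw [uIcc_of_le zero_le_one] at ht
  exact hg.integral_subordinationKernel hx ht.1

end IsStableDensity

end Subordination

section LevyDensity

open Set

/-- The Lévy density `g_{1/2}`, the one-sided `1/2`-stable density. -/
noncomputable def levyDensity (η : ℝ) : ℝ := 1 / (2 * √(π * η ^ 3)) * exp (-1 / (4 * η))

lemma exp_neg_mul_mul_levyDensity {s η : ℝ} (hs : 0 ≤ s) (hη : 0 < η) :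
    exp (-(s * η)) * levyDensity η = exp (-√s) / √π *
      ((|(-1 / 2)| * η ^ (-1 / 2 - 1 : ℝ)) •
        exp (-(1 / 4) * (η ^ (-1 / 2 : ℝ) - 2 * √s / η ^ (-1 / 2 : ℝ)) ^ 2)) := by
  obtain ⟨q, hq, rfl⟩ : ∃ q > 0, q ^ 2 = η := ⟨√η, sqrt_pos.2 hη, sq_sqrt hη.le⟩
  have hinv : (q ^ 2) ^ (-1 / 2 : ℝ) = q⁻¹ := by
    rw [← rpow_natCast_mul hq.le, ← rpow_neg_one]; norm_num
  have hjac : (q ^ 2) ^ (-1 / 2 - 1 : ℝ) = (q ^ 3)⁻¹ := by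
    rw [← rpow_natCast_mul hq.le, ← rpow_natCast, ← rpow_neg hq.le]; norm_num
  have hsqrt : √(π * (q ^ 2) ^ 3) = √π * q ^ 3 := by
    rw [sqrt_mul pi_nonneg, ← pow_mul, pow_mul' q 2 3, sqrt_sq (by positivity)]
  have hexp : exp (-(s * q ^ 2)) * exp (-1 / (4 * q ^ 2)) = exp (-√s) *
      exp (-(1 / 4) * (q⁻¹ - 2 * √s / q⁻¹) ^ 2) := by
    rw [← exp_add, ← exp_add]
    nth_rw 1 [← sq_sqrt hs]
    congr 1
    field_simp
    ring
  rw [levyDensity, mul_left_comm, hexp, hinv, hjac, hsqrt, smul_eq_mul, abs_of_neg (by norm_num)]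
  field_simp

lemma integral_Ioi_gaussian_sub_div {a c : ℝ} (ha : 0 < a) (hc : 0 ≤ c) :
    ∫ v in Ioi (0 : ℝ), exp (-a * (v - c / v) ^ 2) = √(π / a) / 2 :=
  (integral_Ioi_comp_sub_div (integrable_exp_neg_mul_sq ha)
    (fun v => by rw [neg_sq]) hc).trans (integral_gaussian_Ioi a)

theorem isStableDensity_levyDensity : IsStableDensity (1 / 2) levyDensity where
  measurable := by unfold levyDensity; fun_prop
  nonneg η _ := by unfold levyDensity; positivity
  integral_exp_neg_mul s hs := by
    have hsqrt : √(π / (1 / 4)) = 2 * √π := by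
      rw [div_div_eq_mul_div, div_one, mul_comm, sqrt_mul (by norm_num),
        show (4 : ℝ) = 2 ^ 2 by norm_num, sqrt_sq zero_le_two]
    rw [setIntegral_congr_fun measurableSet_Ioi fun η hη => exp_neg_mul_mul_levyDensity hs hη,
      integral_const_mul,
      integral_comp_rpow_Ioi (fun v => exp (-(1 / 4) * (v - 2 * √s / v) ^ 2)) (by norm_num),
      integral_Ioi_gaussian_sub_div (by norm_num) (by positivity), hsqrt, ← sqrt_eq_rpow]
    field_simp

end LevyDensity

/-- For `x > 0`, `₍√h₎e(-x) = ∫_0^∞ ₕe(-η x²) g_{1/2}(η) dη` with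
`g_{1/2}(η) = e^{-1/(4η)} / (2√(π η³))`. -/
theorem sqhe_levy_repr (x : ℝ) (hx : 0 < x) :
    sqhe (-x) = ∫ η in Set.Ioi (0:ℝ),
      he (-η * x ^ 2) * (1 / (2 * Real.sqrt (π * η ^ 3)) * Real.exp (-1 / (4 * η))) := by
  have hroot : (x ^ 2) ^ (1 / 2 : ℝ) = x := by rw [← sqrt_eq_rpow, sqrt_sq hx.le]
  have hlevy := isStableDensity_levyDensity.integral_he_neg_mul one_half_pos (sq_nonneg x)
  rw [hroot] at hlevy
  rw [sqhe_eq_harmExp_half, ← hlevy]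
  rfl
end

section
/- For every real x, ∑_{n=1}^∞ h_n x^n / n! = -e^x · ∑_{n=1}^∞ (-x)^n / (n · n!); equivalently ₕe(x) = 1 - e^x ∑_{n=1}^∞ (-x)^n/(n·n!). -/
open Real MeasureTheory

/-!
The coefficient of `x ^ n` in the Cauchy product of `∑ (-x) ^ k / (k * k!)` and `exp x` is
`(∑ (-1) ^ k * n.choose k / k) / n!`, and the alternating sum over `1 ≤ k ≤ n` is minus the `n`-th
harmonic number. The latter holds by induction: passing from `n` to `n + 1` changes the sum by
`(∑ (-1) ^ k * (n + 1).choose k) / (n + 1)`, and the full alternating sum of binomial coefficients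
vanishes, so that omitting its term at `k = 0` leaves `-1`.
-/

open Finset
open scoped Nat

lemma harm_eq_cast_harmonic (n : ℕ) : harm n = harmonic n := by
  simp [harm, harmonic]

lemma alternating_sum_range_choose_succ (n : ℕ) :
    ∑ k ∈ range (n + 1), (-1 : ℤ) ^ (k + 1) * (n + 1).choose (k + 1) = -1 := by
  have h := Int.alternating_sum_range_choose_of_ne n.succ_ne_zero
  rw [sum_range_succ', pow_zero, Nat.choose_zero_right, Nat.cast_one, mul_one] at h
  exact eq_neg_of_add_eq_zero_left h

lemma choose_succ_succ_div_succ {K : Type*} [Field K] [CharZero K] (n k : ℕ) :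
    ((n + 1).choose (k + 1) / (k + 1) : K) =
      n.choose (k + 1) / (k + 1) + (n + 1).choose (k + 1) / (n + 1) := by
  have absorption : ((n + 1) * n.choose k : K) = (n + 1).choose (k + 1) * (k + 1) :=
    mod_cast Nat.add_one_mul_choose_eq n k
  have pascal : ((n + 1).choose (k + 1) : K) = n.choose k + n.choose (k + 1) :=
    mod_cast Nat.choose_succ_succ n k
  field_simp
  linear_combination (n + 1 : K) * pascal + absorption

lemma alternating_sum_range_choose_succ_div (n : ℕ) :
    ∑ k ∈ range n, (-1) ^ (k + 1) * (n.choose (k + 1) / (k + 1) : ℚ) = -harmonic n := by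
  induction n with
  | zero => simp
  | succ n ih =>
    have total : ∑ k ∈ range (n + 1), (-1 : ℚ) ^ (k + 1) * (n + 1).choose (k + 1) = -1 :=
      mod_cast alternating_sum_range_choose_succ n
    calc ∑ k ∈ range (n + 1), (-1) ^ (k + 1) * ((n + 1).choose (k + 1) / (k + 1) : ℚ)
      _ = ∑ k ∈ range (n + 1), (-1) ^ (k + 1) * (n.choose (k + 1) / (k + 1) : ℚ) +
            (∑ k ∈ range (n + 1), (-1) ^ (k + 1) * ((n + 1).choose (k + 1) : ℚ)) / (n + 1) := by
        simp only [choose_succ_succ_div_succ, mul_add, sum_add_distrib, sum_div, mul_div_assoc]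
      _ = -harmonic n + -1 / (n + 1) := by
        rw [sum_range_succ, ih, total, Nat.choose_succ_self]
        simp
      _ = -harmonic (n + 1) := by
        rw [harmonic_succ]
        push_cast
        ring

lemma alternating_sum_range_inv_factorial_mul_inv_factorial (n : ℕ) :
    ∑ k ∈ range (n + 1), (-1) ^ (k + 1) * (((k + 1) * (k + 1)! : ℚ)⁻¹ * ((n - k)! : ℚ)⁻¹) =
      -(harmonic (n + 1) / (n + 1)!) := by
  rw [← neg_div, ← alternating_sum_range_choose_succ_div, sum_div]
  refine sum_congr rfl fun k hk ↦ ?_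
  rw [Nat.cast_choose ℚ (Nat.succ_le_of_lt (mem_range.mp hk)), Nat.add_sub_add_right]
  field_simp

lemma sum_range_inv_factorial_smul_mul_inv_factorial_smul {𝔸 : Type*} [Ring 𝔸] [Algebra ℚ 𝔸]
    (x : 𝔸) (n : ℕ) :
    ∑ k ∈ range (n + 1),
        (((k + 1) * (k + 1)! : ℚ)⁻¹ • (-x) ^ (k + 1)) * (((n - k)! : ℚ)⁻¹ • x ^ (n - k)) =
      -((harmonic (n + 1) / (n + 1)! : ℚ) • x ^ (n + 1)) := by
  rw [← neg_smul, ← alternating_sum_range_inv_factorial_mul_inv_factorial, sum_smul]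
  refine sum_congr rfl fun k hk ↦ ?_
  have hdeg : k + 1 + (n - k) = n + 1 := by
    have := mem_range.mp hk
    lia
  have hpow : (-x) ^ (k + 1) * x ^ (n - k) = (-1 : ℚ) ^ (k + 1) • x ^ (n + 1) := by
    rw [← neg_one_smul ℚ x, smul_pow, smul_mul_assoc, ← pow_add, hdeg]
  rw [smul_mul_smul_comm, hpow, smul_smul, mul_comm]

section NormedAlgebra

variable {𝔸 : Type*} [NormedRing 𝔸] [NormedAlgebra ℚ 𝔸]

lemma summable_norm_inv_succ_mul_factorial_smul_pow (x : 𝔸) :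
    Summable fun n : ℕ ↦ ‖((n + 1) * (n + 1)! : ℚ)⁻¹ • x ^ (n + 1)‖ := by
  have hexp : Summable fun n : ℕ ↦ ‖((n + 1)! : ℚ)⁻¹ • x ^ (n + 1)‖ :=
    (summable_nat_add_iff 1).mpr (NormedSpace.norm_expSeries_summable' x)
  refine hexp.of_nonneg_of_le (fun n ↦ norm_nonneg _) fun n ↦ ?_
  have hinv : ‖((n : ℚ) + 1)⁻¹‖ ≤ 1 := by
    rw [← Nat.cast_succ, norm_inv, ← Rat.norm_cast_real, Rat.cast_natCast, Real.norm_natCast]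
    exact Nat.cast_inv_le_one _
  rw [mul_inv, mul_smul, norm_smul]
  exact mul_le_of_le_one_left (norm_nonneg _) hinv

theorem he_gosper_series_general [CompleteSpace 𝔸] (x : 𝔸) :
    HasSum (fun n : ℕ ↦ (harmonic (n + 1) / (n + 1)! : ℚ) • x ^ (n + 1))
      (-((∑' n : ℕ, ((n + 1) * (n + 1)! : ℚ)⁻¹ • (-x) ^ (n + 1)) * NormedSpace.exp x)) := by
  have cauchy := hasSum_sum_range_mul_of_summable_norm
    (summable_norm_inv_succ_mul_factorial_smul_pow (-x))
    (NormedSpace.norm_expSeries_summable' (𝕂 := ℚ) x)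
  simpa only [sum_range_inv_factorial_smul_mul_inv_factorial_smul, neg_neg,
    ← congrFun NormedSpace.exp_eq_tsum_rat x] using cauchy.neg

end NormedAlgebra

/-- For every real `x`, `∑_{n=1}^∞ h_n x^n / n! = -e^x ∑_{n=1}^∞ (-x)^n/(n·n!)`. -/
theorem he_gosper_series (x : ℝ) :
    (∑' n : ℕ, harm (n + 1) * x ^ (n + 1) / (Nat.factorial (n + 1) : ℝ)) =
      -Real.exp x * ∑' n : ℕ, (-x) ^ (n + 1) / ((n + 1) * (Nat.factorial (n + 1) : ℝ)) := by
  simpa [harm_eq_cast_harmonic, Rat.smul_def, Real.exp_eq_exp_ℝ, div_eq_mul_inv, mul_comm,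
    mul_left_comm] using (he_gosper_series_general x).tsum_eq
end

section
/- For every integer n ≥ 1, the harmonic polynomial evaluated at -1 satisfies h_n(-1) = (-1)^n (1 - 1/n). -/
open Real MeasureTheory

/-- The `n`-th harmonic polynomial `h_n(x) = x^n + ∑_{s=1}^n C(n,s) h_s x^{n-s}`. -/
noncomputable def hp (n : ℕ) (x : ℝ) : ℝ :=
  x ^ n + ∑ s ∈ Finset.Icc 1 n, (n.choose s : ℝ) * harm s * x ^ (n - s)

/-!
Since the empty harmonic number vanishes, the sum over `s` in `h_n(-1)` is the binomial expansion of
the `n`-th forward difference of the harmonic numbers at `0`. One difference turns `h_y` into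
`1 / (y + 1)`, and the iterated differences of the reciprocal function have a closed product form.
-/

open Finset
open scoped fwdDiff Nat

theorem fwdDiff_iter_comp_addMonoidHom {M N G : Type*} [AddCommMonoid M] [AddCommMonoid N]
    [AddCommGroup G] (f : N → G) (g : M →+ N) (h : M) (n : ℕ) (y : M) :
    (Δ_[h])^[n] (f ∘ g) y = (Δ_[g h])^[n] f (g y) := by
  simp [fwdDiff_iter_eq_sum_shift]

theorem fwdDiff_iter_inv {K : Type*} [Field K] (h : K) (n : ℕ) (x : K)
    (hx : ∀ k ≤ n, x + k * h ≠ 0) :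
    (Δ_[h])^[n] (fun y ↦ y⁻¹) x
      = (-1) ^ n * n ! * h ^ n / ∏ k ∈ range (n + 1), (x + k * h) := by
  induction n generalizing x with
  | zero => simp
  | succ n ih =>
    have hx_add : ∀ k ≤ n, x + h + k * h ≠ 0 := fun k hk ↦ by
      convert hx (k + 1) (by lia) using 1
      push_cast
      ring
    rw [Function.iterate_succ_apply', fwdDiff, ih _ hx_add, ih x fun k hk ↦ hx k (by lia)]
    set P := ∏ k ∈ range n, (x + h + k * h)
    have prod_init : ∏ k ∈ range (n + 1), (x + k * h) = P * x := by
      rw [prod_range_succ']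
      simp [P, add_mul, add_assoc, add_comm h]
    have prod_shift : ∏ k ∈ range (n + 1), (x + h + k * h) = P * (x + (n + 1) * h) := by
      rw [prod_range_succ]
      ring
    have prod_full : ∏ k ∈ range (n + 2), (x + k * h) = P * x * (x + (n + 1) * h) := by
      rw [prod_range_succ, prod_init, Nat.cast_succ]
    have hx_first : x ≠ 0 := by simpa using hx 0 (by lia)
    have hx_last : x + (n + 1) * h ≠ 0 := by simpa using hx (n + 1) le_rfl
    have hP : P ≠ 0 := prod_ne_zero_iff.mpr fun k hk ↦ hx_add k (mem_range.mp hk).le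
    rw [prod_init, prod_shift, prod_full, Nat.factorial_succ]
    push_cast
    field_simp
    ring

theorem fwdDiff_harm : Δ_[1] harm = fun y : ℕ ↦ ((y + 1 : ℕ) : ℝ)⁻¹ := by
  ext y
  simp [fwdDiff, harm, sum_range_succ]

theorem fwdDiff_iter_succ_harm (n y : ℕ) :
    (Δ_[1])^[n + 1] harm y = (-1) ^ n * n ! / (y + 1).ascFactorial (n + 1) := by
  calc (Δ_[1])^[n + 1] harm y
      = (Δ_[1])^[n] (fun m : ℕ ↦ (m : ℝ)⁻¹) (y + 1) := by
        rw [Function.iterate_succ_apply, fwdDiff_harm]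
        exact fwdDiff_iter_comp_add 1 (fun m : ℕ ↦ (m : ℝ)⁻¹) 1 n y
    _ = (Δ_[1])^[n] (fun x : ℝ ↦ x⁻¹) ((y + 1 : ℕ) : ℝ) := by
        simpa [Function.comp_def] using
          fwdDiff_iter_comp_addMonoidHom (fun x : ℝ ↦ x⁻¹) (Nat.castAddMonoidHom ℝ) 1 n (y + 1)
    _ = (-1) ^ n * n ! / (y + 1).ascFactorial (n + 1) := by
        rw [fwdDiff_iter_inv _ _ _ fun k _ ↦ by positivity, Nat.ascFactorial_eq_prod_range]
        simp

theorem fwdDiff_iter_succ_harm_zero (n : ℕ) :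
    (Δ_[1])^[n + 1] harm 0 = (-1) ^ n / (n + 1) := by
  rw [fwdDiff_iter_succ_harm, zero_add, Nat.one_ascFactorial, Nat.factorial_succ]
  push_cast
  field_simp

theorem hp_eq_pow_add_sum_range (n : ℕ) (x : ℝ) :
    hp n x = x ^ n + ∑ s ∈ range (n + 1), n.choose s * harm s * x ^ (n - s) := by
  have harm_zero : harm 0 = 0 := by simp [harm]
  rw [hp, sum_range_eq_add_Ico _ n.add_one_pos, harm_zero, mul_zero, zero_mul, zero_add,
    Ico_add_one_right_eq_Icc]

theorem hp_neg_one_eq_pow_add_fwdDiff_iter (n : ℕ) :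
    hp n (-1) = (-1) ^ n + (Δ_[1])^[n] harm 0 := by
  rw [hp_eq_pow_add_sum_range, fwdDiff_iter_eq_sum_shift]
  simp [mul_comm, mul_assoc]

/-- For `n ≥ 1`, `h_n(-1) = (-1)^n (1 - 1/n)`. -/
theorem hp_neg_one (n : ℕ) (hn : 1 ≤ n) :
    hp n (-1) = (-1 : ℝ) ^ n * (1 - 1 / (n : ℝ)) := by
  obtain ⟨m, rfl⟩ := Nat.exists_eq_add_of_le' hn
  rw [hp_neg_one_eq_pow_add_fwdDiff_iter, fwdDiff_iter_succ_harm_zero, Nat.cast_succ]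
  ring
end

section
/- For every integer n ≥ 1 and every real x, the harmonic Hermite polynomials satisfy the differential equation x · ₕH_n'(x) + 2 · ₕH_n''(x) = n · ₕH_n(x) - 2 α_n''(x), where α_n(x) = n! ∑_{s=1}^{⌊n/2⌋} x^{n-2s} / (s! (n-2s)! (s+1)). -/
open Real MeasureTheory

/-- `h₀* = 1` and `h_r* = h_r` for `r ≥ 1`. -/
noncomputable def hstar (n : ℕ) : ℝ := if n = 0 then 1 else harm n

/-- The `n`-th harmonic Hermite polynomial
`ₕH_n(x) = n! ∑_{r=0}^{⌊n/2⌋} h_r* x^{n-2r} / ((n-2r)! r!)`. -/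
noncomputable def hH (n : ℕ) (x : ℝ) : ℝ :=
  (Nat.factorial n : ℝ) * ∑ r ∈ Finset.range (n / 2 + 1),
    hstar r * x ^ (n - 2 * r) / ((Nat.factorial (n - 2 * r) : ℝ) * (Nat.factorial r : ℝ))

/-- `α_n(x) = n! ∑_{s=1}^{⌊n/2⌋} x^{n-2s} / (s! (n-2s)! (s+1))`. -/
noncomputable def alphaPoly (n : ℕ) (x : ℝ) : ℝ :=
  (Nat.factorial n : ℝ) * ∑ s ∈ Finset.Icc 1 (n / 2),
    x ^ (n - 2 * s) /
      ((Nat.factorial s : ℝ) * (Nat.factorial (n - 2 * s) : ℝ) * (s + 1))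

/-!
With the divided powers `e_k = x^k / k!`, where `e_k = 0` for `k < 0`, one has `e_k' = e_{k-1}` and
`x e_{k-1} = k e_k` for every integer `k`. Hence `F_c = ∑ r, c_r / r! * e_{n - m r}` satisfies
`x F_c' = n F_c - m F_{Sc}^{(m)}`, where `(Sc)_r = c_{r+1}`: the factor `r` in `n - m r` cancels
against `r!`, and moving `r` by one is the same as differentiating `m` times.
For `m = 2` and `c = h*`, write `S h* = h* + Δ h*`. Here `(Δ h*)_r = 1 / (r + 1)` for `r ≥ 1`, while
the convention `h₀* = 1 = h₁` makes `(Δ h*)_0 = 0`, so that `n! F_{Δ h*}` is `α_n`.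
-/

open Finset
open scoped Nat fwdDiff

section GouldHopper

variable {𝕜 : Type*} [NontriviallyNormedField 𝕜]

/-- The divided power `x ^ k / k!`, extended by `0` to negative `k` so that differentiation lowers
the index without exception. -/
noncomputable def dividedPower : ℤ → 𝕜 → 𝕜
  | .ofNat k, x => x ^ k / k !
  | .negSucc _, _ => 0

lemma dividedPower_natCast (k : ℕ) (x : 𝕜) : dividedPower (k : ℤ) x = x ^ k / k ! := rfl

lemma dividedPower_of_neg {k : ℤ} (hk : k < 0) (x : 𝕜) : dividedPower k x = 0 := by
  obtain ⟨j, rfl⟩ := Int.eq_negSucc_of_lt_zero hk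
  rfl

/-- The sum `∑ r < N, c_r / r! * x ^ (n - m r) / (n - m r)!` over divided powers. For `m * N > n` it
no longer depends on `N`; if moreover `c_r = c ^ r`, it is the Gould–Hopper polynomial of degree `n`
divided by `n!`. The index `n` is an integer so that it can be lowered freely. -/
noncomputable def gouldHopperSum (m N : ℕ) (c : ℕ → 𝕜) (n : ℤ) (x : 𝕜) : 𝕜 :=
  ∑ r ∈ range N, c r / r ! * dividedPower (n - m * r) x

lemma gouldHopperSum_add (m N : ℕ) (c d : ℕ → 𝕜) (n : ℤ) (x : 𝕜) :
    gouldHopperSum m N (c + d) n x = gouldHopperSum m N c n x + gouldHopperSum m N d n x := by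
  simp only [gouldHopperSum, Pi.add_apply, add_div, add_mul, sum_add_distrib]

variable [CharZero 𝕜]

lemma mul_dividedPower_sub_one (k : ℤ) (x : 𝕜) :
    x * dividedPower (k - 1) x = k * dividedPower k x := by
  rcases lt_trichotomy k 0 with hk | rfl | hk
  · simp [dividedPower_of_neg hk, dividedPower_of_neg (show k - 1 < 0 by lia)]
  · simp [dividedPower_of_neg]
  · obtain ⟨j, rfl⟩ : ∃ j : ℕ, k = (j + 1 : ℕ) := ⟨(k - 1).toNat, by lia⟩
    rw [show ((j + 1 : ℕ) : ℤ) - 1 = j by lia, dividedPower_natCast, dividedPower_natCast,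
      Nat.factorial_succ, pow_succ']
    push_cast
    field_simp

lemma hasDerivAt_dividedPower (k : ℤ) (x : 𝕜) :
    HasDerivAt (dividedPower k) (dividedPower (k - 1) x) x := by
  rcases lt_trichotomy k 0 with hk | rfl | hk
  · rw [dividedPower_of_neg (by lia), funext (dividedPower_of_neg hk)]
    exact hasDerivAt_const x 0
  · rw [dividedPower_of_neg (by lia), ← Nat.cast_zero, funext (dividedPower_natCast 0)]
    simpa using hasDerivAt_const x (1 : 𝕜)
  · obtain ⟨j, rfl⟩ : ∃ j : ℕ, k = (j + 1 : ℕ) := ⟨(k - 1).toNat, by lia⟩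
    rw [show ((j + 1 : ℕ) : ℤ) - 1 = j by lia, funext (dividedPower_natCast (j + 1))]
    refine ((hasDerivAt_pow (j + 1) x).div_const ((j + 1)! : 𝕜)).congr_deriv ?_
    rw [dividedPower_natCast, Nat.factorial_succ, Nat.add_sub_cancel]
    push_cast
    field_simp

lemma deriv_gouldHopperSum (m N : ℕ) (c : ℕ → 𝕜) (n : ℤ) :
    deriv (gouldHopperSum m N c n) = gouldHopperSum m N c (n - 1) := by
  ext x
  have h := HasDerivAt.fun_sum (u := range N) fun r _ ↦
    (hasDerivAt_dividedPower (n - m * r) x).const_mul (c r / r !)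
  exact h.deriv.trans <| by simp only [gouldHopperSum, sub_right_comm n 1]

lemma iteratedDeriv_gouldHopperSum (k m N : ℕ) (c : ℕ → 𝕜) (n : ℤ) :
    iteratedDeriv k (gouldHopperSum m N c n) = gouldHopperSum m N c (n - k) := by
  induction k with
  | zero => simp
  | succ k ih => rw [iteratedDeriv_succ, ih, deriv_gouldHopperSum, Nat.cast_succ, sub_sub]

lemma gouldHopperSum_natCast_mul {m N : ℕ} {n : ℤ} (hN : n < m * N) (c : ℕ → 𝕜) (x : 𝕜) :
    gouldHopperSum m N (fun r ↦ r * c r) n x =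
      gouldHopperSum m N (fun r ↦ c (r + 1)) (n - m) x := by
  set f : ℕ → 𝕜 := fun r ↦ r * c r / r ! * dividedPower (n - m * r) x
  have hf_zero : f 0 = 0 := by simp [f]
  have hf_last : f N = 0 := by simp [f, dividedPower_of_neg (sub_neg.mpr hN)]
  calc ∑ r ∈ range N, f r = ∑ r ∈ range N, f (r + 1) := by
        rw [← add_zero (∑ r ∈ range N, f r), ← hf_last, ← sum_range_succ, sum_range_succ', hf_zero,
          add_zero]
    _ = gouldHopperSum m N (fun r ↦ c (r + 1)) (n - m) x := by
        refine sum_congr rfl fun r _ ↦ ?_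
        simp only [f, Nat.factorial_succ]
        rw [show n - m * (r + 1 : ℕ) = n - m - m * r by push_cast; ring]
        push_cast
        field_simp

lemma mul_gouldHopperSum_sub_one {m N : ℕ} {n : ℤ} (hN : n < m * N) (c : ℕ → 𝕜) (x : 𝕜) :
    x * gouldHopperSum m N c (n - 1) x = n * gouldHopperSum m N c n x -
      m * gouldHopperSum m N (fun r ↦ c (r + 1)) (n - m) x := by
  rw [← gouldHopperSum_natCast_mul hN]
  simp only [gouldHopperSum, mul_sum, ← sum_sub_distrib]
  refine sum_congr rfl fun r _ ↦ ?_
  have h := mul_dividedPower_sub_one (n - m * r) x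
  push_cast at h
  rw [sub_right_comm n 1]
  linear_combination c r / r ! * h

theorem gouldHopperSum_ode {m N : ℕ} {n : ℤ} (hN : n < m * N) (c : ℕ → 𝕜) (x : 𝕜) :
    x * deriv (gouldHopperSum m N c n) x + m * iteratedDeriv m (gouldHopperSum m N c n) x =
      n * gouldHopperSum m N c n x -
        m * iteratedDeriv m (gouldHopperSum m N (Δ_[1] c) n) x := by
  have h_shift : (fun r ↦ c (r + 1)) = c + Δ_[1] c := by
    ext r
    simp [fwdDiff]
  rw [deriv_gouldHopperSum, iteratedDeriv_gouldHopperSum, iteratedDeriv_gouldHopperSum,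
    mul_gouldHopperSum_sub_one hN, h_shift, gouldHopperSum_add]
  ring

end GouldHopper

lemma fwdDiff_hstar_zero : Δ_[1] hstar 0 = 0 := by
  simp [fwdDiff, hstar, harm]

lemma fwdDiff_hstar_of_ne_zero {r : ℕ} (hr : r ≠ 0) : Δ_[1] hstar r = 1 / (r + 1) := by
  simp [fwdDiff, hstar, harm, hr, sum_range_succ]

lemma dividedPower_natCast_sub_two_mul {n r : ℕ} (hr : r ≤ n / 2) (x : ℝ) :
    dividedPower ((n : ℤ) - (2 : ℕ) * r) x = x ^ (n - 2 * r) / (n - 2 * r)! := by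
  rw [← dividedPower_natCast, show (n : ℤ) - (2 : ℕ) * r = (n - 2 * r : ℕ) by lia]

lemma hH_eq_gouldHopperSum (n : ℕ) :
    hH n = gouldHopperSum 2 (n / 2 + 1) ((n ! : ℝ) • hstar) n := by
  ext x
  rw [hH, gouldHopperSum, mul_sum]
  refine sum_congr rfl fun r hr ↦ ?_
  rw [dividedPower_natCast_sub_two_mul (mem_range_succ_iff.mp hr), Pi.smul_apply, smul_eq_mul]
  field_simp

lemma alphaPoly_eq_gouldHopperSum (n : ℕ) :
    alphaPoly n = gouldHopperSum 2 (n / 2 + 1) ((n ! : ℝ) • Δ_[1] hstar) n := by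
  ext x
  rw [alphaPoly, gouldHopperSum, mul_sum, range_eq_Ico, sum_eq_sum_Ico_succ_bot (by lia)]
  simp only [Pi.smul_apply, fwdDiff_hstar_zero, smul_zero, zero_div, zero_mul, zero_add]
  refine sum_congr rfl fun r hr ↦ ?_
  obtain ⟨hr_pos, hr_le⟩ := mem_Icc.mp hr
  rw [dividedPower_natCast_sub_two_mul hr_le, fwdDiff_hstar_of_ne_zero (by lia), smul_eq_mul]
  field_simp

/-- For `n ≥ 1`, `x ₕH_n'(x) + 2 ₕH_n''(x) = n ₕH_n(x) - 2 α_n''(x)`. -/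
theorem hH_ode (n : ℕ) (hn : 1 ≤ n) (x : ℝ) :
    x * deriv (hH n) x + 2 * deriv (deriv (hH n)) x =
      (n : ℝ) * hH n x - 2 * deriv (deriv (alphaPoly n)) x := by
  have h_trunc : (n : ℤ) < (2 : ℕ) * (n / 2 + 1 : ℕ) := by lia
  have h_ode := gouldHopperSum_ode h_trunc ((n ! : ℝ) • hstar) x
  rw [fwdDiff_const_smul, ← hH_eq_gouldHopperSum, ← alphaPoly_eq_gouldHopperSum] at h_ode
  simpa only [iteratedDeriv_succ, iteratedDeriv_zero, Nat.cast_ofNat, Int.cast_natCast] using h_ode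
end

section
/- For every nonnegative integer n, the truncated exponential number satisfies the integral representation e_n = (1/n!) ∫_0^∞ e^{-s} (1 + s)^n ds; moreover ∫_{-∞}^{∞} (∑_{r=0}^∞ (-1)^r (e_r/r!) x^{2r}) dx = ∫_0^∞ e^{-s} (1+s)^{-1/2} ds, the series under the integral converging for every real x to an integrable function. -/
open Real MeasureTheory

/-- The truncated exponential number `e_n = ∑_{r=0}^n 1/r!`. -/
noncomputable def te (n : ℕ) : ℝ := ∑ r ∈ Finset.range (n + 1), 1 / (Nat.factorial r : ℝ)

/-!
For `u ≥ 0` put `e_n(u) = ∑_{r ≤ n} u ^ r / r!`, so that `n! e_n(u) = ∫_0^∞ e^{-s} (u + s)^n ds`.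
Summing over `r`, with `C_1(t) = ∑ t ^ r / (r! (r + 1)!)` and hence `C_1(-x²) = J_1(2x) / x`,
`∑ (-x²)^r e_{r+1}(u) / r! = ∫_0^∞ e^{-s} (u + s) C_1(-x² (u + s)) ds`,
and the series with `e_r(u)` in place of `e_{r+1}(u)` differs from this one by `u C_1(-u x²)`.

Sonin's theorem for `√x J_1(2x)` gives `C_1(-x²) = O(x^{-3/2})`, so that `I = ∫ C_1(-x²) dx`
converges absolutely. By Fubini and the scaling `x ↦ x √(u + s)`, the integral over `x` of the
right-hand side is `I ∫_0^∞ e^{-s} √(u + s) ds`. For `u = 0` the left-hand side is the Gaussian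
`e^{-x²}`, which forces `I = 2`. The series with `e_r(u)` therefore has integral
`2 ∫_0^∞ e^{-s} √(u + s) ds - 2 √u`, which is `∫_0^∞ e^{-s} (u + s)^{-1/2} ds` by parts.
-/

open Set Filter Asymptotics
open scoped Nat Topology

/-- The Bessel–Clifford function `C_n(x) = ∑ x ^ k / (k! (k + n)!)`. It carries the Bessel function
as `J_n(2x) = x ^ n C_n(-x²)`. -/
noncomputable def besselClifford (n : ℕ) (x : ℝ) : ℝ := ∑' k : ℕ, x ^ k / (k ! * (k + n)!)

lemma norm_besselClifford_term_le (n k : ℕ) {x R : ℝ} (hx : |x| ≤ R) :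
    ‖x ^ k / (k ! * (k + n)!)‖ ≤ R ^ k / k ! := by
  rw [norm_div, norm_pow, norm_eq_abs, norm_mul, norm_natCast, norm_natCast]
  have hR : 0 ≤ R := (abs_nonneg x).trans hx
  have hfac : (1 : ℝ) ≤ (k + n)! := mod_cast (k + n).factorial_pos
  gcongr
  exact le_mul_of_one_le_right (by positivity) hfac

lemma summable_besselClifford (n : ℕ) (x : ℝ) :
    Summable fun k : ℕ ↦ x ^ k / (k ! * (k + n)!) :=
  .of_norm_bounded (summable_pow_div_factorial |x|) fun k ↦ norm_besselClifford_term_le n k le_rfl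

lemma besselClifford_eq_add_tsum (n : ℕ) (x : ℝ) :
    besselClifford n x = 1 / n ! + ∑' k : ℕ, x ^ (k + 1) / ((k + 1)! * (k + 1 + n)!) := by
  rw [besselClifford, (summable_besselClifford n x).tsum_eq_zero_add]
  simp

lemma hasDerivAt_besselClifford (n : ℕ) (x : ℝ) :
    HasDerivAt (besselClifford n) (besselClifford (n + 1) x) x := by
  have hterm (k : ℕ) (y : ℝ) : HasDerivAt (fun y : ℝ ↦ y ^ (k + 1) / ((k + 1)! * (k + 1 + n)!))
      (y ^ k / (k ! * (k + (n + 1))!)) y := by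
    convert! (hasDerivAt_pow (k + 1) y).div_const _ using 1
    rw [show k + (n + 1) = k + 1 + n by ring, k.factorial_succ]
    push_cast
    field_simp
  rw [funext (besselClifford_eq_add_tsum n)]
  refine .const_add _ ?_
  refine hasDerivAt_tsum_of_isPreconnected (summable_pow_div_factorial (|x| + 1))
    Metric.isOpen_ball (convex_ball 0 (|x| + 1)).isPreconnected (fun k y _ ↦ hterm k y)
    (fun k y hy ↦ norm_besselClifford_term_le _ k (mem_ball_zero_iff.1 hy).le)
    (y₀ := x) (by simp) ?_ (by simp)
  exact (summable_nat_add_iff 1).2 (summable_besselClifford n x)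

lemma continuous_besselClifford (n : ℕ) : Continuous (besselClifford n) :=
  continuous_iff_continuousAt.2 fun x ↦ (hasDerivAt_besselClifford n x).continuousAt

lemma hasDerivAt_besselClifford_neg_sq (n : ℕ) (x : ℝ) :
    HasDerivAt (fun x ↦ besselClifford n (-x ^ 2))
      (-(2 * x * besselClifford (n + 1) (-x ^ 2))) x := by
  convert! (hasDerivAt_besselClifford n (-x ^ 2)).comp x (hasDerivAt_pow 2 x).neg using 1
  push_cast
  ring

lemma continuous_besselClifford_neg_sq (n : ℕ) :
    Continuous fun x : ℝ ↦ besselClifford n (-x ^ 2) :=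
  (continuous_besselClifford n).comp (by fun_prop)

lemma besselClifford_recurrence (n : ℕ) (x : ℝ) :
    (n + 1) * besselClifford (n + 1) x + x * besselClifford (n + 2) x = besselClifford n x := by
  rw [besselClifford_eq_add_tsum n, besselClifford_eq_add_tsum (n + 1), mul_add, add_assoc,
    besselClifford, ← tsum_mul_left, ← tsum_mul_left, ← Summable.tsum_add]
  · congr 1
    · rw [n.factorial_succ]
      push_cast
      field_simp
    · refine tsum_congr fun k ↦ ?_
      rw [show k + 1 + (n + 1) = k + 1 + n + 1 by ring, show k + (n + 2) = k + 1 + n + 1 by ring,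
        Nat.factorial_succ (k + 1 + n), k.factorial_succ]
      push_cast
      field_simp
      ring
  · exact ((summable_nat_add_iff 1).2 (summable_besselClifford (n + 1) x)).mul_left _
  · exact (summable_besselClifford (n + 2) x).mul_left _

/-- **Sonin's theorem** on the amplitude of the solutions of `v'' + q v = 0`. -/
theorem antitoneOn_sq_add_sq_div {D : Set ℝ} (hD : Convex ℝ D) {v v' q q' : ℝ → ℝ}
    (hv : ∀ x ∈ D, HasDerivAt v (v' x) x) (hv' : ∀ x ∈ D, HasDerivAt v' (-(q x * v x)) x)
    (hq : ∀ x ∈ D, HasDerivAt q (q' x) x) (hq_pos : ∀ x ∈ D, 0 < q x)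
    (hq'_nonneg : ∀ x ∈ D, 0 ≤ q' x) :
    AntitoneOn (fun x ↦ v x ^ 2 + v' x ^ 2 / q x) D := by
  have henergy (x : ℝ) (hx : x ∈ D) : HasDerivAt (fun x ↦ v x ^ 2 + v' x ^ 2 / q x)
      (-(q' x * (v' x / q x) ^ 2)) x := by
    have hqx := (hq_pos x hx).ne'
    convert! ((hv x hx).fun_pow 2).add (((hv' x hx).fun_pow 2).fun_div (hq x hx) hqx) using 1
    field_simp
    ring
  refine antitoneOn_of_hasDerivWithinAt_nonpos hD
    (fun x hx ↦ (henergy x hx).continuousAt.continuousWithinAt)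
    (fun x hx ↦ (henergy x (interior_subset hx)).hasDerivWithinAt) fun x hx ↦ ?_
  exact neg_nonpos.2 (mul_nonneg (hq'_nonneg x (interior_subset hx)) (sq_nonneg _))

/-- The Liouville normal form `√x J_n(2x)` of the Bessel function, a solution of
`v'' + (4 - (n² - 1/4) / x²) v = 0` for `x > 0`. -/
noncomputable def besselNormal (n : ℕ) (x : ℝ) : ℝ :=
  x ^ (n + 1 / 2 : ℝ) * besselClifford n (-x ^ 2)

lemma besselNormal_succ (n : ℕ) {x : ℝ} (hx : x ≠ 0) :
    besselNormal (n + 1) x = x ^ (n + 1 / 2 : ℝ) * x * besselClifford (n + 1) (-x ^ 2) := by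
  rw [besselNormal, Nat.cast_succ, add_right_comm, rpow_add_one hx]

lemma hasDerivAt_besselNormal (n : ℕ) {x : ℝ} (hx : x ≠ 0) :
    HasDerivAt (besselNormal n) ((n + 1 / 2) / x * besselNormal n x - 2 * besselNormal (n + 1) x)
      x := by
  convert! (hasDerivAt_rpow_const (p := n + 1 / 2) (.inl hx)).mul
    (hasDerivAt_besselClifford_neg_sq n x) using 1
  rw [besselNormal_succ n hx, besselNormal, rpow_sub_one hx]
  field_simp
  ring

lemma hasDerivAt_besselNormal_succ (n : ℕ) {x : ℝ} (hx : x ≠ 0) :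
    HasDerivAt (besselNormal (n + 1))
      (2 * besselNormal n x - (n + 1 / 2) / x * besselNormal (n + 1) x) x := by
  convert! hasDerivAt_besselNormal (n + 1) hx using 1
  rw [besselNormal_succ (n + 1) hx, besselNormal_succ n hx, besselNormal,
    ← besselClifford_recurrence n, Nat.cast_succ, add_right_comm (n : ℝ), rpow_add_one hx]
  field_simp
  ring

lemma hasDerivAt_deriv_besselNormal (n : ℕ) {x : ℝ} (hx : x ≠ 0) :
    HasDerivAt (fun x ↦ (n + 1 / 2) / x * besselNormal n x - 2 * besselNormal (n + 1) x)
      (-((4 - (n ^ 2 - 1 / 4) / x ^ 2) * besselNormal n x)) x := by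
  convert! (((hasDerivAt_inv hx).const_mul (n + 1 / 2 : ℝ)).mul
    (hasDerivAt_besselNormal n hx)).sub ((hasDerivAt_besselNormal_succ n hx).const_mul 2) using 1
  field_simp
  ring

lemma bddAbove_sq_besselNormal {n : ℕ} (hn : n ≠ 0) :
    BddAbove ((fun x ↦ besselNormal n x ^ 2) '' Ici (n : ℝ)) := by
  have hn1 : (1 : ℝ) ≤ n := mod_cast Nat.one_le_iff_ne_zero.2 hn
  have hpos (x : ℝ) (hx : x ∈ Ici (n : ℝ)) : 0 < x := by linarith [mem_Ici.1 hx]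
  have hq (x : ℝ) (hx : x ∈ Ici (n : ℝ)) :
      HasDerivAt (fun x : ℝ ↦ 4 - (n ^ 2 - 1 / 4) / x ^ 2) (2 * (n ^ 2 - 1 / 4) / x ^ 3) x := by
    have hx0 := hpos x hx
    convert! ((hasDerivAt_const x (n ^ 2 - 1 / 4 : ℝ)).fun_div (hasDerivAt_pow 2 x)
      (by positivity)).const_sub 4 using 1
    push_cast
    field_simp
    ring
  have hq_pos (x : ℝ) (hx : x ∈ Ici (n : ℝ)) : 0 < 4 - (n ^ 2 - 1 / 4) / x ^ 2 := by
    have hx0 := hpos x hx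
    rw [sub_pos, div_lt_iff₀ (by positivity)]
    nlinarith [mem_Ici.1 hx]
  have hq'_nonneg (x : ℝ) (hx : x ∈ Ici (n : ℝ)) : 0 ≤ 2 * (n ^ 2 - 1 / 4) / x ^ 3 :=
    div_nonneg (by nlinarith) (pow_pos (hpos x hx) 3).le
  have hanti := antitoneOn_sq_add_sq_div (convex_Ici (n : ℝ))
    (fun x hx ↦ hasDerivAt_besselNormal n (hpos x hx).ne')
    (fun x hx ↦ hasDerivAt_deriv_besselNormal n (hpos x hx).ne') hq hq_pos hq'_nonneg
  refine ⟨_, forall_mem_image.2 fun x hx ↦ le_trans ?_ (hanti self_mem_Ici hx hx)⟩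
  exact le_add_of_nonneg_right (div_nonneg (sq_nonneg _) (hq_pos x hx).le)

lemma isBigO_besselClifford_neg_sq {n : ℕ} (hn : n ≠ 0) :
    (fun x : ℝ ↦ besselClifford n (-x ^ 2)) =O[atTop] fun x : ℝ ↦ x ^ (-(n + 1 / 2) : ℝ) := by
  obtain ⟨C, hC⟩ := bddAbove_sq_besselNormal hn
  refine .of_bound √C ?_
  filter_upwards [eventually_ge_atTop (n : ℝ), eventually_gt_atTop 0] with x hnx hx
  have hbound : |besselNormal n x| ≤ √C := abs_le_sqrt (hC ⟨x, hnx, rfl⟩)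
  rw [besselNormal, abs_mul, abs_of_pos (rpow_pos_of_pos hx _)] at hbound
  rwa [rpow_neg hx.le, norm_inv, norm_of_nonneg (rpow_nonneg hx.le _), ← div_eq_mul_inv,
    le_div_iff₀' (rpow_pos_of_pos hx _)]

lemma integrable_besselClifford_neg_sq {n : ℕ} (hn : n ≠ 0) :
    Integrable fun x : ℝ ↦ besselClifford n (-x ^ 2) := by
  have hn1 : (1 : ℝ) ≤ n := mod_cast Nat.one_le_iff_ne_zero.2 hn
  have hloc := (continuous_besselClifford_neg_sq n).locallyIntegrable (μ := volume)
  exact hloc.integrable_of_isBigO_atTop_of_norm_isNegInvariant (.of_forall fun x ↦ by simp)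
    (isBigO_besselClifford_neg_sq hn) (integrableAtFilter_rpow_atTop_iff.2 (by linarith))

/-- The partial sum `∑_{r=0}^n u ^ r / r!` of the exponential series; `e_n` is the case `u = 1`. -/
noncomputable def truncExp (u : ℝ) (n : ℕ) : ℝ := ∑ r ∈ Finset.range (n + 1), u ^ r / r !

lemma truncExp_succ (u : ℝ) (n : ℕ) :
    truncExp u (n + 1) = truncExp u n + u ^ (n + 1) / (n + 1)! :=
  Finset.sum_range_succ _ _

lemma truncExp_zero_left (n : ℕ) : truncExp 0 n = 1 := by
  simp [truncExp, Finset.sum_range_succ']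

lemma te_eq_truncExp (n : ℕ) : te n = truncExp 1 n := by simp [te, truncExp]

lemma integrableOn_exp_neg_mul_pow (k : ℕ) : IntegrableOn (fun s ↦ exp (-s) * s ^ k) (Ioi 0) := by
  simpa using GammaIntegral_convergent (s := k + 1) (by positivity)

lemma integral_exp_neg_mul_pow (k : ℕ) : ∫ s in Ioi 0, exp (-s) * s ^ k = k ! := by
  rw [← Gamma_nat_eq_factorial, Gamma_eq_integral (by positivity)]
  simp

lemma exp_neg_mul_add_pow (u : ℝ) (n : ℕ) (s : ℝ) : exp (-s) * (u + s) ^ n =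
    ∑ k ∈ Finset.range (n + 1), u ^ k * n.choose k * (exp (-s) * s ^ (n - k)) := by
  rw [add_pow, Finset.mul_sum]
  exact Finset.sum_congr rfl fun k _ ↦ by ring

lemma integrableOn_exp_neg_mul_add_pow (u : ℝ) (n : ℕ) :
    IntegrableOn (fun s ↦ exp (-s) * (u + s) ^ n) (Ioi 0) := by
  simp_rw [exp_neg_mul_add_pow]
  exact integrable_finsetSum _ fun k _ ↦ (integrableOn_exp_neg_mul_pow (n - k)).const_mul _

lemma integral_exp_neg_mul_add_pow (u : ℝ) (n : ℕ) :
    ∫ s in Ioi 0, exp (-s) * (u + s) ^ n = n ! * truncExp u n := by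
  simp_rw [exp_neg_mul_add_pow]
  rw [integral_finsetSum _ fun k _ ↦ (integrableOn_exp_neg_mul_pow (n - k)).const_mul _, truncExp,
    Finset.mul_sum]
  refine Finset.sum_congr rfl fun k hk ↦ ?_
  rw [integral_const_mul, integral_exp_neg_mul_pow,
    Nat.cast_choose ℝ (Finset.mem_range_succ_iff.1 hk)]
  field_simp

lemma summable_truncExp {u : ℝ} (hu : 0 ≤ u) (n : ℕ) (t : ℝ) :
    Summable fun r : ℕ ↦ t ^ r / r ! * truncExp u (r + n) := by
  refine .of_norm_bounded ((summable_pow_div_factorial |t|).mul_right (exp u)) fun r ↦ ?_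
  have hnonneg : 0 ≤ truncExp u (r + n) := Finset.sum_nonneg fun _ _ ↦ by positivity
  rw [norm_mul, norm_div, norm_pow, norm_natCast, norm_eq_abs, norm_of_nonneg hnonneg]
  gcongr
  exact sum_le_exp_of_nonneg hu _

theorem hasSum_integral_besselClifford {u : ℝ} (hu : 0 ≤ u) (n : ℕ) (t : ℝ) :
    HasSum (fun r : ℕ ↦ t ^ r / r ! * truncExp u (r + n))
      (∫ s in Ioi 0, exp (-s) * ((u + s) ^ n * besselClifford n (t * (u + s)))) := by
  have hint (t : ℝ) (r : ℕ) :
      ∫ s in Ioi 0, t ^ r / (r ! * (r + n)!) * (exp (-s) * (u + s) ^ (r + n)) =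
        t ^ r / r ! * truncExp u (r + n) := by
    rw [integral_const_mul, integral_exp_neg_mul_add_pow]
    field_simp
  have hnorm (r : ℕ) :
      ∫ s in Ioi 0, ‖t ^ r / (r ! * (r + n)!) * (exp (-s) * (u + s) ^ (r + n))‖ =
        |t| ^ r / r ! * truncExp u (r + n) := by
    rw [← hint]
    refine setIntegral_congr_fun measurableSet_Ioi fun s hs ↦ ?_
    have hus : 0 ≤ u + s := add_nonneg hu (le_of_lt hs)
    simp [abs_of_nonneg hus]
  have hsum := hasSum_integral_of_summable_integral_norm
    (fun r ↦ (integrableOn_exp_neg_mul_add_pow u (r + n)).const_mul (t ^ r / (r ! * (r + n)!)))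
    ((summable_truncExp hu n |t|).congr fun r ↦ (hnorm r).symm)
  simp_rw [hint t] at hsum
  convert! hsum using 3 with s
  rw [besselClifford, ← mul_assoc, ← tsum_mul_left]
  exact tsum_congr fun r ↦ by rw [mul_pow, pow_add]; ring

lemma integral_mul_comp_mul_right (g : ℝ → ℝ) {a : ℝ} (ha : 0 < a) :
    ∫ x, a * g (x * a) = ∫ x, g x := by
  rw [integral_const_mul, Measure.integral_comp_mul_right, abs_of_pos (inv_pos.2 ha), smul_eq_mul,
    mul_inv_cancel_left₀ ha.ne']

section Scaling

variable {α : Type*} [MeasurableSpace α] {μ : Measure α} [SFinite μ] {g : ℝ → ℝ} {w c : α → ℝ}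

lemma integrable_prod_mul_comp_mul_right (hg : Integrable g) (hg_meas : Measurable g)
    (hw : Integrable w μ) (hc : Measurable c) (hc_pos : ∀ᵐ a ∂μ, 0 < c a) :
    Integrable (fun p : ℝ × α ↦ w p.2 * (c p.2 * g (p.1 * c p.2))) (volume.prod μ) := by
  have hmeas : AEStronglyMeasurable (fun p : ℝ × α ↦ w p.2 * (c p.2 * g (p.1 * c p.2)))
      (volume.prod μ) :=
    hw.aestronglyMeasurable.comp_snd.mul (by fun_prop)
  refine (integrable_prod_iff' hmeas).2 ⟨?_, ?_⟩
  · filter_upwards [hc_pos] with a ha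
    exact ((hg.comp_mul_right' ha.ne').const_mul _).const_mul _
  · refine (hw.norm.mul_const (∫ x, ‖g x‖)).congr ?_
    filter_upwards [hc_pos] with a ha
    simp_rw [norm_mul, norm_of_nonneg ha.le]
    rw [integral_const_mul, integral_mul_comp_mul_right (fun x ↦ ‖g x‖) ha]

lemma integral_integral_mul_comp_mul_right (hg : Integrable g) (hg_meas : Measurable g)
    (hw : Integrable w μ) (hc : Measurable c) (hc_pos : ∀ᵐ a ∂μ, 0 < c a) :
    ∫ x, ∫ a, w a * (c a * g (x * c a)) ∂μ = (∫ a, w a ∂μ) * ∫ x, g x := by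
  rw [integral_integral_swap (integrable_prod_mul_comp_mul_right hg hg_meas hw hc hc_pos),
    ← integral_mul_const]
  refine integral_congr_ae ?_
  filter_upwards [hc_pos] with a ha
  rw [integral_const_mul, integral_mul_comp_mul_right g ha]

end Scaling

lemma integrableOn_exp_neg_mul_add_rpow_neg_half {u : ℝ} (hu : 0 ≤ u) :
    IntegrableOn (fun s ↦ exp (-s) * (u + s) ^ (-(1 : ℝ) / 2)) (Ioi 0) := by
  refine (GammaIntegral_convergent (s := 1 / 2) (by norm_num)).mono' (by fun_prop) ?_
  filter_upwards [ae_restrict_mem measurableSet_Ioi] with s (hs : 0 < s)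
  rw [norm_of_nonneg (by positivity), show (1 / 2 - 1 : ℝ) = -1 / 2 by norm_num]
  exact mul_le_mul_of_nonneg_left
    (rpow_le_rpow_of_nonpos hs (le_add_of_nonneg_left hu) (by norm_num)) (exp_pos _).le

lemma integrableOn_exp_neg_mul_sqrt_add {u : ℝ} (hu : 0 ≤ u) :
    IntegrableOn (fun s ↦ exp (-s) * √(u + s)) (Ioi 0) := by
  refine (integrableOn_exp_neg_mul_add_pow (u + 1) 1).mono' (by fun_prop) ?_
  filter_upwards [ae_restrict_mem measurableSet_Ioi] with s (hs : 0 < s)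
  rw [norm_of_nonneg (by positivity), pow_one]
  gcongr
  exact sqrt_le_iff.2 ⟨by positivity, by nlinarith⟩

lemma tendsto_exp_neg_mul_sqrt_add (u : ℝ) :
    Tendsto (fun s ↦ exp (-s) * √(u + s)) atTop (𝓝 0) := by
  have hlim := ((tendsto_rpow_mul_exp_neg_mul_atTop_nhds_zero (1 / 2) 1 one_pos).comp
    (tendsto_atTop_add_const_left atTop u tendsto_id)).const_mul (exp u)
  rw [mul_zero] at hlim
  refine hlim.congr fun s ↦ ?_
  simp only [Function.comp, id, ← sqrt_eq_rpow]
  rw [mul_left_comm, ← exp_add, mul_comm]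
  ring_nf

lemma hasDerivAt_neg_exp_neg_mul_sqrt_add {u s : ℝ} (hus : 0 < u + s) :
    HasDerivAt (fun s ↦ -(exp (-s) * √(u + s)))
      (exp (-s) * √(u + s) - 1 / 2 * (exp (-s) * (u + s) ^ (-(1 : ℝ) / 2))) s := by
  convert! (((hasDerivAt_neg s).exp).fun_mul (((hasDerivAt_id s).const_add u).sqrt hus.ne')).neg
    using 1
  rw [neg_div, rpow_neg hus.le, ← sqrt_eq_rpow]
  simp only [id]
  field_simp
  ring

lemma integral_exp_neg_mul_sqrt_add {u : ℝ} (hu : 0 ≤ u) :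
    ∫ s in Ioi 0, exp (-s) * √(u + s) =
      √u + 1 / 2 * ∫ s in Ioi 0, exp (-s) * (u + s) ^ (-(1 : ℝ) / 2) := by
  have hint_sqrt := integrableOn_exp_neg_mul_sqrt_add hu
  have hint_rpow := (integrableOn_exp_neg_mul_add_rpow_neg_half hu).const_mul (1 / 2)
  have hparts := integral_Ioi_of_hasDerivAt_of_tendsto (a := 0)
    (by fun_prop : Continuous fun s ↦ -(exp (-s) * √(u + s))).continuousWithinAt
    (fun s hs ↦ hasDerivAt_neg_exp_neg_mul_sqrt_add (add_pos_of_nonneg_of_pos hu hs))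
    (hint_sqrt.sub hint_rpow) (tendsto_exp_neg_mul_sqrt_add u).neg
  rw [integral_sub hint_sqrt hint_rpow, integral_const_mul] at hparts
  simpa [sub_eq_iff_eq_add] using hparts

section Average

variable {u : ℝ}

lemma tsum_truncExp_succ_eq_integral (hu : 0 ≤ u) (x : ℝ) :
    ∑' r : ℕ, (-x ^ 2) ^ r / r ! * truncExp u (r + 1) =
      ∫ s in Ioi 0,
        exp (-s) * √(u + s) * (√(u + s) * besselClifford 1 (-(x * √(u + s)) ^ 2)) := by
  rw [(hasSum_integral_besselClifford hu 1 (-x ^ 2)).tsum_eq]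
  refine setIntegral_congr_fun measurableSet_Ioi fun s (hs : 0 < s) ↦ ?_
  have hus : 0 ≤ u + s := by positivity
  simp only [pow_one, mul_pow, sq_sqrt hus, neg_mul, mul_assoc]
  rw [← mul_assoc (√_), mul_self_sqrt hus]

lemma ae_sqrt_add_pos (hu : 0 ≤ u) : ∀ᵐ s ∂volume.restrict (Ioi 0), 0 < √(u + s) := by
  filter_upwards [ae_restrict_mem measurableSet_Ioi] with s hs
  exact sqrt_pos.2 (add_pos_of_nonneg_of_pos hu hs)

lemma integrable_tsum_truncExp_succ (hu : 0 ≤ u) :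
    Integrable fun x : ℝ ↦ ∑' r : ℕ, (-x ^ 2) ^ r / r ! * truncExp u (r + 1) := by
  simp_rw [tsum_truncExp_succ_eq_integral hu]
  exact (integrable_prod_mul_comp_mul_right (integrable_besselClifford_neg_sq one_ne_zero)
    (continuous_besselClifford_neg_sq 1).measurable
    (integrableOn_exp_neg_mul_sqrt_add hu) (by fun_prop) (ae_sqrt_add_pos hu)).integral_prod_left

lemma integral_tsum_truncExp_succ (hu : 0 ≤ u) :
    ∫ x : ℝ, ∑' r : ℕ, (-x ^ 2) ^ r / r ! * truncExp u (r + 1) =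
      (∫ s in Ioi 0, exp (-s) * √(u + s)) * ∫ x : ℝ, besselClifford 1 (-x ^ 2) := by
  simp_rw [tsum_truncExp_succ_eq_integral hu]
  exact integral_integral_mul_comp_mul_right (integrable_besselClifford_neg_sq one_ne_zero)
    (continuous_besselClifford_neg_sq 1).measurable
    (integrableOn_exp_neg_mul_sqrt_add hu) (by fun_prop) (ae_sqrt_add_pos hu)

lemma integral_besselClifford_one_neg_sq : ∫ x : ℝ, besselClifford 1 (-x ^ 2) = 2 := by
  have hgauss : ∫ x : ℝ, ∑' r : ℕ, (-x ^ 2) ^ r / r ! * truncExp 0 (r + 1) = √π := by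
    simp_rw [truncExp_zero_left, mul_one, ← congrFun NormedSpace.exp_eq_tsum_div, ← exp_eq_exp_ℝ]
    simpa using integral_gaussian 1
  have hgamma : ∫ s in Ioi 0, exp (-s) * √(0 + s) = √π / 2 := by
    rw [integral_exp_neg_mul_sqrt_add le_rfl, ← Gamma_one_half_eq,
      Gamma_eq_integral (by norm_num)]
    simp only [sqrt_zero, zero_add, show (1 / 2 - 1 : ℝ) = -1 / 2 by norm_num]
    ring
  rw [integral_tsum_truncExp_succ le_rfl, hgamma] at hgauss
  refine mul_left_cancel₀ (show √π / 2 ≠ 0 by positivity) (hgauss.trans ?_)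
  ring

lemma tsum_truncExp_eq_sub (hu : 0 ≤ u) (x : ℝ) :
    ∑' r : ℕ, (-x ^ 2) ^ r / r ! * truncExp u r =
      ∑' r : ℕ, (-x ^ 2) ^ r / r ! * truncExp u (r + 1) -
        u * besselClifford 1 (-(x * √u) ^ 2) := by
  rw [besselClifford, ← tsum_mul_left,
    ← (summable_truncExp hu 1 _).tsum_sub ((summable_besselClifford 1 _).mul_left u)]
  refine tsum_congr fun r ↦ ?_
  rw [truncExp_succ, mul_pow, sq_sqrt hu, ← neg_mul, mul_pow]
  field_simp
  ring

lemma integrable_mul_besselClifford (hu : 0 ≤ u) :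
    Integrable fun x : ℝ ↦ u * besselClifford 1 (-(x * √u) ^ 2) := by
  rcases hu.eq_or_lt with rfl | hu
  · simp
  · exact ((integrable_besselClifford_neg_sq one_ne_zero).comp_mul_right'
      (sqrt_ne_zero'.2 hu)).const_mul u

lemma integral_mul_besselClifford (u : ℝ) :
    ∫ x : ℝ, u * besselClifford 1 (-(x * √u) ^ 2) = 2 * √u := by
  rw [integral_const_mul,
    Measure.integral_comp_mul_right (fun x ↦ besselClifford 1 (-x ^ 2)) √u,
    integral_besselClifford_one_neg_sq, abs_of_nonneg (by positivity), smul_eq_mul, ← mul_assoc,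
    ← div_eq_mul_inv, div_sqrt, mul_comm]

end Average

theorem te_integral_repr_general {u : ℝ} (hu : 0 ≤ u) :
    (∀ n : ℕ, truncExp u n = 1 / n ! * ∫ s in Ioi 0, exp (-s) * (u + s) ^ n) ∧
    (∀ x : ℝ, Summable fun r : ℕ ↦ (-1) ^ r * truncExp u r / r ! * x ^ (2 * r)) ∧
    Integrable (fun x : ℝ ↦ ∑' r : ℕ, (-1) ^ r * truncExp u r / r ! * x ^ (2 * r)) ∧
    ∫ x : ℝ, ∑' r : ℕ, (-1) ^ r * truncExp u r / r ! * x ^ (2 * r) =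
      ∫ s in Ioi 0, exp (-s) * (u + s) ^ (-(1 : ℝ) / 2) := by
  have hterm (x : ℝ) (r : ℕ) : (-1) ^ r * truncExp u r / r ! * x ^ (2 * r) =
      (-x ^ 2) ^ r / r ! * truncExp u r := by
    rw [neg_pow (x ^ 2), ← pow_mul]
    ring
  simp_rw [hterm]
  refine ⟨fun n ↦ ?_, fun x ↦ summable_truncExp hu 0 _, ?_, ?_⟩
  · rw [integral_exp_neg_mul_add_pow]
    field_simp
  · simp_rw [tsum_truncExp_eq_sub hu]
    exact (integrable_tsum_truncExp_succ hu).sub (integrable_mul_besselClifford hu)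
  · simp_rw [tsum_truncExp_eq_sub hu]
    rw [integral_sub (integrable_tsum_truncExp_succ hu) (integrable_mul_besselClifford hu),
      integral_tsum_truncExp_succ hu, integral_mul_besselClifford u,
      integral_besselClifford_one_neg_sq, integral_exp_neg_mul_sqrt_add hu]
    ring

/-- `e_n = (1/n!) ∫_0^∞ e^{-s}(1+s)^n ds`; moreover
`∫_{-∞}^{∞} ∑_{r=0}^∞ (-1)^r (e_r/r!) x^{2r} dx = ∫_0^∞ e^{-s}(1+s)^{-1/2} ds`,
the series under the integral converging for every real `x` to an integrable function. -/
theorem te_integral_repr :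
    (∀ n : ℕ, te n =
      (1 / (Nat.factorial n : ℝ)) * ∫ s in Set.Ioi (0:ℝ), Real.exp (-s) * (1 + s) ^ n) ∧
    (∀ x : ℝ, Summable (fun r : ℕ => (-1 : ℝ) ^ r * te r / (Nat.factorial r : ℝ) * x ^ (2 * r))) ∧
    Integrable (fun x : ℝ => ∑' r : ℕ, (-1 : ℝ) ^ r * te r / (Nat.factorial r : ℝ) * x ^ (2 * r)) ∧
    (∫ x : ℝ, ∑' r : ℕ, (-1 : ℝ) ^ r * te r / (Nat.factorial r : ℝ) * x ^ (2 * r)) =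
      ∫ s in Set.Ioi (0:ℝ), Real.exp (-s) * (1 + s) ^ (-(1:ℝ)/2) := by
  simpa only [te_eq_truncExp] using te_integral_repr_general zero_le_one
end
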